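/- Let p, q, s be distinct primes with p ≡ 5 (mod 8), q ≡ 3 (mod 8), s ≡ 3 (mod 4), (p/q) = (p/s) = 1. Then the 2-Sylow subgroups of the ideal class groups of ℚ(√(pq), √s) and ℚ(√(ps), √q) are cyclic of order h₂(pqs). -/

import Mathlib

open NumberField

/-- The biquadratic field `ℚ(√a, √b)`, realized inside `ℂ`. -/
noncomputable def biquadF (a b : ℕ) : IntermediateField ℚ ℂ :=
  IntermediateField.adjoin ℚ {((Real.sqrt a : ℝ) : ℂ), ((Real.sqrt b : ℝ) : ℂ)}

/-- The real quadratic field `ℚ(√d)`, realized inside `ℂ`. -/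
noncomputable def quadF (d : ℕ) : IntermediateField ℚ ℂ :=
  IntermediateField.adjoin ℚ {((Real.sqrt d : ℝ) : ℂ)}

set_option linter.unusedSectionVars false
open scoped nonZeroDivisors


theorem span_ne {R : Type*} [CommRing R] {x : R} (hx : x ≠ 0) : Ideal.span {x} ≠ 0 := by
  simpa using hx

section cl
variable {R : Type*} [CommRing R] [IsDedekindDomain R]

open Classical in
/-- The class of an ideal (the trivial class for the zero ideal). -/
noncomputable def cl (I : Ideal R) : ClassGroup R :=
  if h : I ≠ 0 then ClassGroup.mk0 ⟨I, mem_nonZeroDivisors_of_ne_zero h⟩ else 1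

theorem cl_of_ne (I : Ideal R) (h : I ≠ 0) :
    cl I = ClassGroup.mk0 ⟨I, mem_nonZeroDivisors_of_ne_zero h⟩ := by
  rw [cl, dif_pos h]

theorem cl_mul (I J : Ideal R) (hI : I ≠ 0) (hJ : J ≠ 0) : cl (I * J) = cl I * cl J := by
  rw [cl_of_ne _ hI, cl_of_ne _ hJ, cl_of_ne _ (mul_ne_zero hI hJ), ← map_mul]
  rfl

theorem cl_one : cl (1 : Ideal R) = 1 := by
  have h : (1 : Ideal R) ≠ 0 := one_ne_zero
  have := cl_mul (1 : Ideal R) 1 h h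
  rw [mul_one] at this
  exact (left_eq_mul.mp this)

theorem cl_pow (I : Ideal R) (hI : I ≠ 0) (n : ℕ) : cl (I ^ n) = cl I ^ n := by
  induction n with
  | zero => rw [pow_zero, pow_zero, cl_one]
  | succ n ih => rw [pow_succ, pow_succ, cl_mul _ _ (pow_ne_zero n hI) hI, ih]

theorem cl_surj (y : ClassGroup R) : ∃ I : Ideal R, I ≠ 0 ∧ cl I = y := by
  obtain ⟨I, rfl⟩ := ClassGroup.mk0_surjective y
  have h : (I : Ideal R) ≠ 0 := nonZeroDivisors.ne_zero I.2
  exact ⟨I, h, cl_of_ne _ h⟩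

theorem cl_span (x : R) : cl (Ideal.span {x}) = 1 := by
  by_cases hx : x = 0
  · rw [cl, dif_neg]; simp [hx]
  · rw [cl_of_ne _ (span_ne hx), ClassGroup.mk0_eq_one_iff]
    exact ⟨⟨x, rfl⟩⟩

theorem cl_eq_one (I : Ideal R) (hI : I ≠ 0) (h : cl I = 1) : ∃ x, x ≠ 0 ∧ I = Ideal.span {x} := by
  rw [cl_of_ne _ hI, ClassGroup.mk0_eq_one_iff] at h
  obtain ⟨⟨x, hx⟩⟩ := h
  refine ⟨x, ?_, hx⟩
  rintro rfl
  apply hI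
  rw [hx]; simp

theorem cl_eq (I J : Ideal R) (hI : I ≠ 0) (hJ : J ≠ 0) (h : cl I = cl J) :
    ∃ x y, x ≠ 0 ∧ y ≠ 0 ∧ Ideal.span {x} * I = Ideal.span {y} * J := by
  rw [cl_of_ne _ hI, cl_of_ne _ hJ, ClassGroup.mk0_eq_mk0_iff] at h
  obtain ⟨x, y, hx, hy, e⟩ := h
  exact ⟨x, y, hx, hy, e⟩

theorem cl_span_mul (x : R) (hx : x ≠ 0) (I : Ideal R) (hI : I ≠ 0) :
    cl (Ideal.span {x} * I) = cl I := by
  rw [cl_mul _ _ (span_ne hx) hI, cl_span, one_mul]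

theorem cl_eq_of (I J : Ideal R) (hI : I ≠ 0) (hJ : J ≠ 0) (x y : R) (hx : x ≠ 0) (hy : y ≠ 0)
    (h : Ideal.span {x} * I = Ideal.span {y} * J) : cl I = cl J := by
  rw [← cl_span_mul x hx I hI, ← cl_span_mul y hy J hJ, h]

theorem ideal_sq_inj (J I : Ideal R) (h : J ^ 2 = I ^ 2) : J = I :=
  pow_left_injective two_ne_zero h

theorem ideal_sq_dvd (J I : Ideal R) (h : J ^ 2 ∣ I ^ 2) : J ∣ I :=
  (UniqueFactorizationMonoid.pow_dvd_pow_iff_dvd two_ne_zero).mp h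

/-- If `I² = (x)` and `z² = x r b²` then the class of `I` is represented by `J` with `J² = (r)`. -/
theorem cl_sq_rep (I : Ideal R) (hI : I ≠ 0) (x z r b : R) (hb : b ≠ 0) (hr : r ≠ 0)
    (hx : I ^ 2 = Ideal.span {x}) (e : z ^ 2 = x * r * b ^ 2) :
    ∃ J : Ideal R, J ≠ 0 ∧ cl J = cl I ∧ J ^ 2 = Ideal.span {r} := by
  have hsq : (Ideal.span {z}) ^ 2 = (I * Ideal.span {b}) ^ 2 * Ideal.span {r} := by
    rw [mul_pow, hx, Ideal.span_singleton_pow, e, Ideal.span_singleton_pow,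
      Ideal.span_singleton_mul_span_singleton, Ideal.span_singleton_mul_span_singleton]
    congr 2; ring
  obtain ⟨J, hJ⟩ := ideal_sq_dvd (I * Ideal.span {b}) (Ideal.span {z}) ⟨_, hsq⟩
  have hIb : I * Ideal.span {b} ≠ 0 := mul_ne_zero hI (span_ne hb)
  have hJ2 : J ^ 2 = Ideal.span {r} := by
    rw [hJ, mul_pow] at hsq
    exact mul_left_cancel₀ (pow_ne_zero 2 hIb) hsq
  have hJ0 : J ≠ 0 := by
    rintro rfl
    apply span_ne hr
    rw [← hJ2]; simp
  refine ⟨J, hJ0, ?_, hJ2⟩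
  have h1 : cl I * cl J = 1 := by
    have := cl_span z
    rwa [hJ, cl_mul _ _ hIb hJ0, cl_mul _ _ hI (span_ne hb), cl_span, mul_one] at this
  have h2 : cl J * cl J = 1 := by
    rw [← cl_mul _ _ hJ0 hJ0, ← pow_two, hJ2, cl_span]
  exact mul_right_cancel (h2.trans h1.symm)

end cl

section lift
variable {R S : Type*} [CommRing R] [IsDedekindDomain R] [CommRing S] [IsDedekindDomain S]

theorem exists_lift (φ : Ideal R →*₀ Ideal S) (h0 : ∀ I, I ≠ 0 → φ I ≠ 0)
    (hp : ∀ x : R, x ≠ 0 → ∃ y : S, φ (Ideal.span {x}) = Ideal.span {y}) :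
    ∃ f : ClassGroup R →* ClassGroup S, ∀ I, I ≠ 0 → f (cl I) = cl (φ I) := by
  have key : ∀ I J : Ideal R, I ≠ 0 → J ≠ 0 → cl I = cl J → cl (φ I) = cl (φ J) := by
    intro I J hI hJ h
    obtain ⟨x, y, hx, hy, e⟩ := cl_eq I J hI hJ h
    obtain ⟨x', hx'⟩ := hp x hx
    obtain ⟨y', hy'⟩ := hp y hy
    have e2 := congrArg φ e
    rw [map_mul, map_mul, hx', hy'] at e2
    have hx0 : x' ≠ 0 := by
      rintro rfl
      apply h0 _ (span_ne hx); rw [hx']; simp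
    have hy0 : y' ≠ 0 := by
      rintro rfl
      apply h0 _ (span_ne hy); rw [hy']; simp
    exact cl_eq_of _ _ (h0 I hI) (h0 J hJ) x' y' hx0 hy0 e2
  choose rep hrep0 hrep using cl_surj (R := R)
  have hf : ∀ I, I ≠ 0 → cl (φ (rep (cl I))) = cl (φ I) :=
    fun I hI => key _ _ (hrep0 _) hI (hrep _)
  refine ⟨MonoidHom.mk' (fun y => cl (φ (rep y))) ?_, hf⟩
  intro a b
  rw [← cl_mul _ _ (h0 _ (hrep0 a)) (h0 _ (hrep0 b)), ← map_mul]
  apply key _ _ (hrep0 _) (mul_ne_zero (hrep0 a) (hrep0 b))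
  rw [hrep, cl_mul _ _ (hrep0 a) (hrep0 b), hrep, hrep]

end lift

/-- `r` becomes the square of a principal ideal up to rational squares. -/
def TT (R : Type*) [CommRing R] (r : ℤ) : Prop :=
  ∃ (δ : R) (c : ℤ), c ≠ 0 ∧ Associated (δ ^ 2) ((r * c ^ 2 : ℤ) : R)

section TT
variable {R : Type*} [CommRing R]

theorem TT.mul {a b : ℤ} (ha : TT R a) (hb : TT R b) : TT R (a * b) := by
  obtain ⟨x, c, hc, h⟩ := ha
  obtain ⟨y, e, he, h'⟩ := hb
  refine ⟨x * y, c * e, mul_ne_zero hc he, ?_⟩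
  have := h.mul_mul h'
  rw [← Int.cast_mul] at this
  rw [← mul_pow] at this
  rwa [show a * b * (c * e) ^ 2 = a * c ^ 2 * (b * e ^ 2) by ring]

theorem TT.cancel {a m : ℤ} (hm : m ≠ 0) (ha : TT R (a * m ^ 2)) : TT R a := by
  obtain ⟨x, c, hc, h⟩ := ha
  refine ⟨x, m * c, mul_ne_zero hm hc, ?_⟩
  convert h using 2
  ring

theorem TT.of_sq (a : R) (r : ℤ) (h : a ^ 2 = r) : TT R r :=
  ⟨a, 1, one_ne_zero, by simp [h]⟩

theorem TT.one : TT R 1 := TT.of_sq 1 1 (by simp)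

theorem TT.map {S : Type*} [CommRing S] (f : R →+* S) {r : ℤ} (h : TT R r) : TT S r := by
  obtain ⟨x, c, hc, h⟩ := h
  refine ⟨f x, c, hc, ?_⟩
  have := h.map f
  simpa using this

theorem TT.cl_eq_one [IsDedekindDomain R] [CharZero R] {r : ℤ} (h : TT R r)
    (J : Ideal R) (hJ : J ≠ 0)
    (hJ2 : J ^ 2 = Ideal.span {(r : R)}) : cl J = 1 := by
  obtain ⟨x, c, hc, h⟩ := h
  have hc' : (c : R) ≠ 0 := by exact_mod_cast hc
  have h1 := Ideal.span_singleton_eq_span_singleton.mpr h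
  rw [← Ideal.span_singleton_pow] at h1
  have h2 : Ideal.span {(((r * c ^ 2 : ℤ)) : R)} = (J * Ideal.span {(c : R)}) ^ 2 := by
    rw [mul_pow, hJ2, Ideal.span_singleton_pow, Ideal.span_singleton_mul_span_singleton]
    push_cast; rfl
  rw [h2] at h1
  have h3 := ideal_sq_inj _ _ h1
  have h4 := cl_span x
  rwa [h3, cl_mul _ _ hJ (span_ne hc'), cl_span, mul_one] at h4

end TT


/-- Local solvability of a norm equation at a ramified prime. -/
theorem arith_aux (l : ℕ) [hl : Fact l.Prime] (d n : ℤ) (hd : (l : ℤ) ∣ d) (hd2 : ¬ (l : ℤ) ^ 2 ∣ d) :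
    ∀ (N : ℕ) (X Y c : ℤ), c.natAbs ≤ N → c ≠ 0 → X ^ 2 - d * Y ^ 2 = n * c ^ 2 →
      IsSquare (n : ZMod l) := by
  have hlp : Prime (l : ℤ) := Nat.prime_iff_prime_int.mp hl.out
  intro N
  induction N with
  | zero => intro X Y c h h0; omega
  | succ N ih =>
    intro X Y c hN hc h
    by_cases hlc : (l : ℤ) ∣ c
    · obtain ⟨c', rfl⟩ := hlc
      obtain ⟨d', rfl⟩ := hd
      have hX : (l : ℤ) ∣ X := by
        apply hlp.dvd_of_dvd_pow (n := 2)
        exact ⟨n * l * c' ^ 2 + d' * Y ^ 2, by linear_combination h⟩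
      obtain ⟨X', rfl⟩ := hX
      have hd' : ¬ (l : ℤ) ∣ d' := by
        rintro ⟨e, rfl⟩
        exact hd2 ⟨e, by ring⟩
      have h2 : (l : ℤ) * (X' ^ 2 - n * c' ^ 2) = d' * Y ^ 2 := by
        have := hlp.ne_zero
        apply mul_left_cancel₀ this
        linear_combination h
      have hY : (l : ℤ) ∣ Y := by
        have : (l : ℤ) ∣ d' * Y ^ 2 := ⟨_, h2.symm⟩
        rcases hlp.dvd_or_dvd this with h | h
        · exact absurd h hd'
        · exact hlp.dvd_of_dvd_pow h
      obtain ⟨Y', rfl⟩ := hY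
      have hc' : c' ≠ 0 := by rintro rfl; simp at hc
      refine ih X' Y' c' ?_ hc' ?_
      · rw [Int.natAbs_mul] at hN
        have h1 : 0 < c'.natAbs := Int.natAbs_pos.mpr hc'
        have h2 : 2 ≤ (l : ℤ).natAbs := by simpa using hl.out.two_le
        nlinarith
      · have := hlp.ne_zero
        apply mul_left_cancel₀ (pow_ne_zero 2 this)
        linear_combination h
    · have hc0 : (c : ZMod l) ≠ 0 := by
        rwa [Ne, ZMod.intCast_zmod_eq_zero_iff_dvd]
      have hd0 : (d : ZMod l) = 0 := by
        rwa [ZMod.intCast_zmod_eq_zero_iff_dvd]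
      have h1 := congrArg (Int.cast : ℤ → ZMod l) h
      push_cast at h1
      rw [hd0] at h1
      refine ⟨(X : ZMod l) / c, ?_⟩
      field_simp
      linear_combination -h1

theorem arith (l : ℕ) [hl : Fact l.Prime] (d n : ℤ) (hd : (l : ℤ) ∣ d) (hd2 : ¬ (l : ℤ) ^ 2 ∣ d)
    (X Y c : ℤ) (hc : c ≠ 0) (h : X ^ 2 - d * Y ^ 2 = n * c ^ 2) : IsSquare (n : ZMod l) :=
  arith_aux l d n hd hd2 _ X Y c le_rfl hc h

/-- The nontrivial automorphism of a quadratic extension. -/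
theorem exists_conj (K L : Type*) [Field K] [Field L] [Algebra K L] [CharZero K]
    (h2 : Module.finrank K L = 2) :
    ∃ σ : L ≃ₐ[K] L, (∀ x, σ (σ x) = x) ∧ (∀ x, σ x = x → ∃ y : K, algebraMap K L y = x) ∧
      (∀ x, algebraMap K L (Algebra.norm K x) = x * σ x) := by
  classical
  have : Algebra.IsQuadraticExtension K L := ⟨h2⟩
  have : FiniteDimensional K L := Module.finite_of_finrank_eq_succ h2
  have : IsGalois K L := inferInstance
  have hc : Fintype.card (L ≃ₐ[K] L) = 2 := by
    rw [← Nat.card_eq_fintype_card, IsGalois.card_aut_eq_finrank, h2]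
  obtain ⟨σ, hσ⟩ : ∃ σ : L ≃ₐ[K] L, σ ≠ 1 :=
    Fintype.exists_ne_of_one_lt_card (by omega) 1
  have hall : ∀ g : L ≃ₐ[K] L, g = 1 ∨ g = σ := by
    intro g
    by_contra! hg
    have : 3 ≤ Fintype.card (L ≃ₐ[K] L) := by
      have h3 : ({1, σ, g} : Finset (L ≃ₐ[K] L)).card = 3 := by
        rw [Finset.card_eq_three]
        exact ⟨1, σ, g, hσ.symm, hg.1.symm, hg.2.symm, rfl⟩
      rw [← h3]; exact Finset.card_le_univ _
    omega
  refine ⟨σ, ?_, ?_, ?_⟩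
  · intro x
    have : σ * σ = 1 := by
      rcases hall (σ * σ) with h | h
      · exact h
      · exact absurd (by simpa using h) hσ
    exact DFunLike.congr_fun this x
  · intro x hx
    have : x ∈ (⊥ : IntermediateField K L) := by
      rw [IsGalois.mem_bot_iff_fixed]
      intro g
      rcases hall g with h | h
      · simp [h]
      · rw [h, hx]
    exact IntermediateField.mem_bot.mp this
  · intro x
    rw [Algebra.norm_eq_prod_automorphisms]
    have : (Finset.univ : Finset (L ≃ₐ[K] L)) = {1, σ} := by
      ext g; simpa using hall g
    rw [this, Finset.prod_pair hσ.symm]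
    simp

/-- A quadratic number field with a square root `θ` of `d` and conjugation `τ`. -/
structure QF (K : Type*) [Field K] [NumberField K] (d : ℤ) (θ : 𝓞 K) (τ : 𝓞 K ≃+* 𝓞 K) : Prop where
  sq : θ * θ = (d : 𝓞 K)
  conjθ : τ θ = -θ
  invol : ∀ x, τ (τ x) = x
  norm : ∀ x, ((Algebra.norm ℤ x : ℤ) : 𝓞 K) = x * τ x
  fix : ∀ x, τ x = x → ∃ n : ℤ, x = n
  fr : Module.finrank ℚ K = 2

/-- A quadratic extension of number fields with conjugation `σ`. -/
structure QE (K L : Type*) [Field K] [NumberField K] [Field L] [NumberField L] [Algebra K L]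
    (σ : 𝓞 L ≃ₐ[𝓞 K] 𝓞 L) : Prop where
  invol : ∀ x, σ (σ x) = x
  norm : ∀ x, algebraMap (𝓞 K) (𝓞 L) (Algebra.intNorm (𝓞 K) (𝓞 L) x) = x * σ x
  fix : ∀ x, σ x = x → ∃ n : 𝓞 K, x = algebraMap (𝓞 K) (𝓞 L) n
  deg : Module.finrank K L = 2

theorem exists_QE (K L : Type*) [Field K] [NumberField K] [Field L] [NumberField L] [Algebra K L]
    (h2 : Module.finrank K L = 2) : ∃ σ, QE K L σ := by
  obtain ⟨σ, hi, hf, hn⟩ := exists_conj K L h2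
  have hmap : ∀ x : 𝓞 L, algebraMap (𝓞 L) L (galRestrict (𝓞 K) K L (𝓞 L) σ x) = σ (algebraMap (𝓞 L) L x) :=
    fun x => algebraMap_galRestrict_apply (𝓞 K) σ x
  have inj : Function.Injective (algebraMap (𝓞 L) L) := FaithfulSMul.algebraMap_injective _ _
  refine ⟨galRestrict (𝓞 K) K L (𝓞 L) σ, ⟨?_, ?_, ?_, h2⟩⟩
  · intro x
    apply inj
    rw [hmap, hmap, hi]
  · intro x
    apply inj
    rw [map_mul, hmap, ← hn, ← IsScalarTower.algebraMap_apply, IsScalarTower.algebraMap_apply (𝓞 K) K L,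
      Algebra.algebraMap_intNorm (A := 𝓞 K) (K := K) (L := L) (B := 𝓞 L)]
  · intro x hx
    obtain ⟨y, hy⟩ := hf (algebraMap (𝓞 L) L x) (by rw [← hmap, hx])
    have hyi : IsIntegral ℤ y := by
      have : IsIntegral ℤ (algebraMap K L y) := by rw [hy]; exact x.2
      exact (isIntegral_algebraMap_iff (algebraMap K L).injective).mp this
    refine ⟨⟨y, hyi⟩, ?_⟩
    apply inj
    rw [← hy]
    rfl

theorem exists_QF (K : Type*) [Field K] [NumberField K] (d : ℤ) (θ : 𝓞 K)
    (h2 : Module.finrank ℚ K = 2) (hd : θ * θ = (d : 𝓞 K)) (hns : ¬ IsSquare d) :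
    ∃ τ, QF K d θ τ := by
  obtain ⟨σ, hi, hf, hn⟩ := exists_conj ℚ K h2
  have hmap : ∀ x : 𝓞 K, algebraMap (𝓞 K) K (galRestrict ℤ ℚ K (𝓞 K) σ x) = σ (algebraMap (𝓞 K) K x) :=
    fun x => algebraMap_galRestrict_apply ℤ σ x
  have inj : Function.Injective (algebraMap (𝓞 K) K) := FaithfulSMul.algebraMap_injective _ _
  have hfix : ∀ x, galRestrict ℤ ℚ K (𝓞 K) σ x = x → ∃ n : ℤ, x = n := by
    intro x hx
    obtain ⟨y, hy⟩ := hf (algebraMap (𝓞 K) K x) (by rw [← hmap, hx])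
    have hyi : IsIntegral ℤ y := by
      have : IsIntegral ℤ (algebraMap ℚ K y) := by rw [hy]; exact x.2
      exact (isIntegral_algebraMap_iff (algebraMap ℚ K).injective).mp this
    obtain ⟨n, hn⟩ := IsIntegrallyClosed.isIntegral_iff.mp hyi
    refine ⟨n, ?_⟩
    apply inj
    rw [← hy, ← hn]
    simp
  refine ⟨(galRestrict ℤ ℚ K (𝓞 K) σ).toRingEquiv, ⟨hd, ?_, ?_, ?_, hfix, h2⟩⟩
  · show galRestrict ℤ ℚ K (𝓞 K) σ θ = -θ
    have h1 : (galRestrict ℤ ℚ K (𝓞 K) σ θ - θ) * (galRestrict ℤ ℚ K (𝓞 K) σ θ + θ) = 0 := by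
      have : galRestrict ℤ ℚ K (𝓞 K) σ θ * galRestrict ℤ ℚ K (𝓞 K) σ θ = d := by
        rw [← map_mul, hd]; simp
      linear_combination this - hd
    rcases mul_eq_zero.mp h1 with h | h
    · exfalso
      obtain ⟨n, hn⟩ := hfix θ (sub_eq_zero.mp h)
      apply hns
      refine ⟨n, ?_⟩
      rw [hn] at hd
      exact_mod_cast hd.symm
    · exact eq_neg_of_add_eq_zero_left h
  · intro x
    apply inj
    show algebraMap (𝓞 K) K (galRestrict ℤ ℚ K (𝓞 K) σ (galRestrict ℤ ℚ K (𝓞 K) σ x)) = _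
    rw [hmap, hmap, hi]
  · intro x
    apply inj
    show _ = algebraMap (𝓞 K) K (x * (galRestrict ℤ ℚ K (𝓞 K) σ x))
    rw [map_mul, hmap, ← hn]
    have := Algebra.coe_norm_int x
    simp only [map_intCast]
    rw [← Algebra.coe_norm_int x]
    simp


namespace QF
variable {K : Type*} [Field K] [NumberField K] {d : ℤ} {θ : 𝓞 K} {τ : 𝓞 K ≃+* 𝓞 K}

theorem trace (h : QF K d θ τ) (x : 𝓞 K) : ∃ t : ℤ, x + τ x = t :=
  h.fix _ (by rw [map_add, h.invol]; ring)

theorem diff (h : QF K d θ τ) (x : 𝓞 K) : ∃ t : ℤ, θ * (x - τ x) = t :=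
  h.fix _ (by rw [map_mul, map_sub, h.invol, h.conjθ]; ring)

theorem normform (h : QF K d θ τ) (hd : d ≠ 0) (x : 𝓞 K) :
    ∃ X Y c : ℤ, c ≠ 0 ∧ X ^ 2 - d * Y ^ 2 = (Algebra.norm ℤ x) * c ^ 2 := by
  obtain ⟨t, ht⟩ := h.trace x
  obtain ⟨m, hm⟩ := h.diff x
  refine ⟨d * t, m, 2 * d, by simpa using hd, ?_⟩
  have : (((d * t) ^ 2 - d * m ^ 2 : ℤ) : 𝓞 K) = (((Algebra.norm ℤ x) * (2 * d) ^ 2 : ℤ) : 𝓞 K) := by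
    push_cast
    rw [h.norm, ← ht, ← hm, ← h.sq]
    ring
  exact_mod_cast this

theorem norm_ne (h : QF K d θ τ) (hd : d ≠ 0) (q : ℕ) (hq : q.Prime) (hq4 : q % 4 = 3)
    (hqd : (q : ℤ) ∣ d) (hqd2 : ¬ (q : ℤ) ^ 2 ∣ d) (x : 𝓞 K) (n : ℤ) (hn : n ≠ 0) :
    x * τ x ≠ -(n : 𝓞 K) ^ 2 := by
  intro hx
  have : Fact q.Prime := ⟨hq⟩
  rw [← h.norm] at hx
  have hx' : Algebra.norm ℤ x = - n ^ 2 := by exact_mod_cast hx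
  obtain ⟨X, Y, c, hc, e⟩ := h.normform hd x
  have := arith q d (-1) hqd hqd2 X Y (n * c) (mul_ne_zero hn hc) (by rw [e, hx']; ring)
  have h3 := (ZMod.exists_sq_eq_neg_one_iff (p := q)).mp (by simpa using this)
  exact h3 hq4

theorem sqfree_decomp (m : ℤ) (hm : m ≠ 0) : ∃ r b : ℤ, Squarefree r ∧ b ≠ 0 ∧ m = r * b ^ 2 := by
  obtain ⟨a, b, hab, hs⟩ := Nat.sq_mul_squarefree m.natAbs
  have hb : b ≠ 0 := by
    rintro rfl
    simp at hab
    exact hm (Int.natAbs_eq_zero.mp hab.symm)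
  rcases Int.natAbs_eq m with h | h
  · refine ⟨a, b, Int.squarefree_natCast.mpr hs, by exact_mod_cast hb, ?_⟩
    rw [h, ← hab]; push_cast; ring
  · refine ⟨-a, b, ?_, by exact_mod_cast hb, ?_⟩
    · rw [← Int.squarefree_natAbs]; simpa using hs
    · rw [h, ← hab]; push_cast; ring

/-- Hilbert 90 in disguise. -/
theorem hilb (h : QF K d θ τ) (x : 𝓞 K) (n : ℤ) (hn : n ≠ 0) (hx : x * τ x = (n : 𝓞 K) ^ 2) :
    ∃ (r b : ℤ) (z : 𝓞 K), Squarefree r ∧ b ≠ 0 ∧ z ≠ 0 ∧ z ^ 2 = x * r * b ^ 2 := by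
  have hn' : (n : 𝓞 K) ≠ 0 := by exact_mod_cast hn
  have hx0 : x ≠ 0 := by rintro rfl; simp at hx; exact hn (by simpa using hx.symm)
  obtain ⟨m, z, hm, hz, e⟩ : ∃ (m : ℤ) (z : 𝓞 K), m ≠ 0 ∧ z ≠ 0 ∧ z ^ 2 = x * m := by
    by_cases hc : x + n = 0
    · refine ⟨-n, x, by simpa using hn, hx0, ?_⟩
      push_cast
      linear_combination x * hc
    · obtain ⟨t, ht⟩ := h.trace x
      have key : (x + n) ^ 2 = x * ((t + 2 * n : ℤ) : 𝓞 K) := by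
        push_cast
        rw [← ht]; linear_combination -hx
      refine ⟨t + 2 * n, x + n, ?_, hc, key⟩
      intro h0
      rw [h0] at key
      simp at key
      exact hc key
  obtain ⟨r, b, hr, hb, rfl⟩ := sqfree_decomp m hm
  refine ⟨r, b, z, hr, hb, hz, ?_⟩
  rw [e]; push_cast; ring

end QF

theorem surj_aux {A B : Type*} [CommRing A] [CommRing B] [Algebra A B] (c : Ideal A) (J : Ideal B)
    (h : J.comap (algebraMap A B) = c) (hpos : Nat.card (B ⧸ J) ≠ 0)
    (hcard : Nat.card (A ⧸ c) = Nat.card (B ⧸ J)) (w : B) : ∃ a : A, w - algebraMap A B a ∈ J := by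
  have hfin : Finite (B ⧸ J) := Nat.finite_of_card_ne_zero hpos
  let f := Ideal.quotientMap J (algebraMap A B) (le_of_eq h.symm)
  have hinj : Function.Injective f := Ideal.quotientMap_injective' (le_of_eq h)
  have hb : Function.Bijective f := (Nat.bijective_iff_injective_and_card f).mpr ⟨hinj, hcard⟩
  obtain ⟨a, ha⟩ := hb.2 (Ideal.Quotient.mk J w)
  obtain ⟨a, rfl⟩ := Ideal.Quotient.mk_surjective a
  refine ⟨a, ?_⟩
  rw [← Ideal.Quotient.eq, ← ha]
  exact Ideal.quotientMap_mk

namespace QF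
variable {K : Type*} [Field K] [NumberField K] {d : ℤ} {θ : 𝓞 K} {τ : 𝓞 K ≃+* 𝓞 K}

theorem norm_int (h : QF K d θ τ) (r : ℤ) : Algebra.norm ℤ (r : 𝓞 K) = r ^ 2 := by
  have := h.norm (r : 𝓞 K)
  have ht : τ (r : 𝓞 K) = r := map_intCast τ r
  rw [ht] at this
  have h2 : ((Algebra.norm ℤ (r : 𝓞 K) : ℤ) : 𝓞 K) = ((r ^ 2 : ℤ) : 𝓞 K) := by
    rw [this]; push_cast; ring
  exact_mod_cast h2

theorem absNorm_of_sq (h : QF K d θ τ) (J : Ideal (𝓞 K)) (r : ℤ)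
    (hJ : J ^ 2 = Ideal.span {(r : 𝓞 K)}) : Ideal.absNorm J = r.natAbs := by
  have h1 := congrArg Ideal.absNorm hJ
  rw [map_pow, Ideal.absNorm_span_singleton, h.norm_int, Int.natAbs_pow] at h1
  exact Nat.pow_left_injective (n := 2) two_ne_zero h1

theorem int_dvd (h : QF K d θ τ) (a b : ℤ) (hab : (a : 𝓞 K) ∣ (b : 𝓞 K)) : a ∣ b := by
  have := map_dvd (Algebra.norm ℤ) hab
  rw [h.norm_int, h.norm_int] at this
  exact (Int.pow_dvd_pow_iff two_ne_zero).mp this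

theorem sq_inj (J I : Ideal (𝓞 K)) (h : J ^ 2 = I ^ 2) : J = I :=
  pow_left_injective two_ne_zero h

theorem disc_dvd (h : QF K d θ τ) (J : Ideal (𝓞 K)) (r : ℤ) (hr : Squarefree r)
    (hJ : J ^ 2 = Ideal.span {(r : 𝓞 K)}) (w : 𝓞 K) : (r : 𝓞 K) ∣ (w - τ w) ^ 2 := by
  have hrJ : (r : 𝓞 K) ∈ J := by
    apply Ideal.pow_le_self (n := 2) two_ne_zero
    rw [hJ]; exact Ideal.mem_span_singleton_self _
  have hcomap : J.comap (algebraMap ℤ (𝓞 K)) = Ideal.span {r} := by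
    ext m
    rw [Ideal.mem_comap, Ideal.mem_span_singleton]
    constructor
    · intro hm
      have h2 : ((m : 𝓞 K)) ^ 2 ∈ J ^ 2 := Ideal.pow_mem_pow (by simpa using hm) 2
      rw [hJ, Ideal.mem_span_singleton] at h2
      have h3 : r ∣ m ^ 2 := h.int_dvd _ _ (by exact_mod_cast h2)
      exact (hr.dvd_pow_iff_dvd two_ne_zero).mp h3
    · rintro ⟨k, rfl⟩
      simp only [eq_intCast]
      push_cast
      exact Ideal.mul_mem_right _ _ hrJ
  have hJn := h.absNorm_of_sq J r hJ
  have hcard : Nat.card (𝓞 K ⧸ J) = r.natAbs := by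
    rw [← hJn]; rfl
  have hcard2 : Nat.card (ℤ ⧸ Ideal.span {r}) = r.natAbs := by
    have : Nat.card (ℤ ⧸ Ideal.span {r}) = Ideal.absNorm (Ideal.span {r}) := rfl
    rw [this, Ideal.absNorm_span_singleton]; simp
  have hstab : ∀ x ∈ J, τ x ∈ J := by
    have : J.map (τ : 𝓞 K →+* 𝓞 K) = J := by
      apply sq_inj
      rw [← Ideal.map_pow, hJ, Ideal.map_span]
      simp
    intro x hx
    rw [← this]
    exact Ideal.mem_map_of_mem (τ : 𝓞 K →+* 𝓞 K) hx
  obtain ⟨a, ha⟩ := surj_aux (Ideal.span {r}) J hcomap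
    (by rw [hcard]; simpa using hr.ne_zero) (by rw [hcard, hcard2]) w
  have h2 := hstab _ ha
  rw [map_sub] at h2
  simp only [eq_intCast, map_intCast] at h2 ha
  have h3 : w - τ w ∈ J := by
    have := J.sub_mem ha h2
    simpa using this
  have h4 := Ideal.pow_mem_pow h3 2
  rwa [hJ, Ideal.mem_span_singleton] at h4

theorem dvd_four (h : QF K d θ τ) (J : Ideal (𝓞 K)) (r : ℤ) (hr : Squarefree r)
    (hJ : J ^ 2 = Ideal.span {(r : 𝓞 K)}) : r ∣ 4 * d := by
  apply h.int_dvd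
  have := h.disc_dvd J r hr hJ θ
  rw [h.conjθ] at this
  convert this using 1
  push_cast; rw [← h.sq]; ring

theorem exists_half (h : QF K d θ τ) (hd : d % 4 = 1) : ∃ w : 𝓞 K, 2 * w = 1 + θ ∧ 
    w ^ 2 - w = ((d - 1) / 4 : ℤ) := by
  have h4 : d = 4 * ((d - 1) / 4) + 1 := by omega
  set e := (d - 1) / 4 with he
  have hinteg : IsIntegral ℤ ((1 + (θ : K)) / 2) := by
    refine ⟨Polynomial.X ^ 2 - Polynomial.X - Polynomial.C e, ?_, ?_⟩
    · have : (Polynomial.X ^ 2 - Polynomial.X - Polynomial.C e : Polynomial ℤ)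
        = Polynomial.X ^ 2 + (-Polynomial.X - Polynomial.C e) := by ring
      rw [this]
      apply Polynomial.monic_X_pow_add
      compute_degree
      norm_num
    · have hs : (θ : K) * θ = d := by
        have := congrArg (algebraMap (𝓞 K) K) h.sq
        simpa using this
      have hs' : (θ : K) * θ = 4 * (e : K) + 1 := by
        rw [hs]; rw [h4]; push_cast; ring
      simp only [Polynomial.eval₂_sub, Polynomial.eval₂_pow, Polynomial.eval₂_X,
        Polynomial.eval₂_C]
      rw [eq_intCast (algebraMap ℤ K)]
      field_simp
      linear_combination hs'
  refine ⟨⟨_, hinteg⟩, ?_, ?_⟩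
  · apply RingOfIntegers.coe_injective
    push_cast
    show 2 * ((1 + (θ : K)) / 2) = 1 + (θ : K)
    field_simp
  · have h4' : (4 : 𝓞 K) ≠ 0 := by norm_num
    set w : 𝓞 K := ⟨_, hinteg⟩ with hw
    have h2 : 2 * w = 1 + θ := by
      apply RingOfIntegers.coe_injective
      push_cast
      show 2 * ((1 + (θ : K)) / 2) = 1 + (θ : K)
      field_simp
    apply mul_left_cancel₀ h4'
    have h5 : θ * θ = 4 * (e : 𝓞 K) + 1 := by
      rw [h.sq, h4]; push_cast; ring
    linear_combination (2 * w + θ - 1) * h2 + h5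

theorem dvd_self (h : QF K d θ τ) (hd : d % 4 = 1) (J : Ideal (𝓞 K)) (r : ℤ) (hr : Squarefree r)
    (hJ : J ^ 2 = Ideal.span {(r : 𝓞 K)}) : r ∣ d := by
  apply h.int_dvd
  obtain ⟨w, hw, -⟩ := h.exists_half hd
  have := h.disc_dvd J r hr hJ w
  have h2 : w - τ w = θ := by
    have h2' : (2 : 𝓞 K) ≠ 0 := by norm_num
    apply mul_left_cancel₀ h2'
    have h3 := congrArg τ hw
    simp only [map_mul, map_add, map_one, h.conjθ, map_ofNat] at h3
    linear_combination hw - h3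
  rw [h2] at this
  rw [← h.sq]; rwa [pow_two] at this

/-- Every class of order dividing 2 is represented by an ideal whose square is generated by a
squarefree positive integer. -/
theorem genus (h : QF K d θ τ) (hneg : ∀ (x : 𝓞 K) (n : ℤ), n ≠ 0 → x * τ x ≠ -(n : 𝓞 K) ^ 2)
    (y : ClassGroup (𝓞 K)) (hy : y ^ 2 = 1) :
    ∃ (J : Ideal (𝓞 K)) (r : ℕ), J ≠ 0 ∧ cl J = y ∧ Squarefree r ∧
      J ^ 2 = Ideal.span {((r : ℤ) : 𝓞 K)} := by
  obtain ⟨I, hI0, rfl⟩ := cl_surj y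
  rw [← cl_pow _ hI0] at hy
  obtain ⟨x, hx0, hx⟩ := cl_eq_one _ (pow_ne_zero 2 hI0) hy
  have h1 := congrArg Ideal.absNorm hx
  rw [map_pow, Ideal.absNorm_span_singleton] at h1
  obtain ⟨n, hn⟩ : ∃ n, n = Ideal.absNorm I := ⟨_, rfl⟩
  rw [← hn] at h1
  have hn0 : (n : ℤ) ≠ 0 := by
    rintro h0
    have h0 : n = 0 := by exact_mod_cast h0
    rw [h0] at hn
    exact hI0 (Ideal.absNorm_eq_zero_iff.mp hn.symm)
  have hx2 : x * τ x = ((n : ℤ) : 𝓞 K) ^ 2 := by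
    rw [← h.norm]
    rcases Int.natAbs_eq (Algebra.norm ℤ x) with e | e
    · rw [e, ← h1]; push_cast; ring
    · exfalso
      apply hneg x n hn0
      rw [← h.norm, e, ← h1]; push_cast; ring
  obtain ⟨r, b, z, hr, hb, hz, e⟩ := h.hilb x n hn0 hx2
  have hb' : (b : 𝓞 K) ≠ 0 := by exact_mod_cast hb
  have hr' : (r : 𝓞 K) ≠ 0 := by exact_mod_cast hr.ne_zero
  obtain ⟨J, hJ0, hJ, hJ2⟩ := cl_sq_rep I hI0 x z r b hb' hr' hx e
  refine ⟨J, r.natAbs, hJ0, hJ, Int.squarefree_natAbs.mpr hr, ?_⟩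
  rw [hJ2, Ideal.span_singleton_eq_span_singleton]
  rcases Int.natAbs_eq r with e | e
  · rw [← e]
  · have : (r : 𝓞 K) = - (((r.natAbs : ℕ) : ℤ) : 𝓞 K) := by
      rw [← Int.cast_neg, ← e]
    rw [this]
    exact (Associated.refl _).neg_left

end QF


namespace QF
variable {K : Type*} [Field K] [NumberField K] {d : ℤ} {θ : 𝓞 K} {τ : 𝓞 K ≃+* 𝓞 K}

/-- A genus character. -/
theorem chi (h : QF K d θ τ) (hd : d ≠ 0) (p : ℕ) (hp : p.Prime) (hp4 : p % 4 = 1)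
    (hpd : (p : ℤ) ∣ d) (hpd2 : ¬ (p : ℤ) ^ 2 ∣ d) (I : Ideal (𝓞 K)) (hI : I ≠ 0)
    (y : ClassGroup (𝓞 K)) (hy : cl I = y ^ 2) (n e : ℕ) (he : e ≠ 0)
    (hn : Ideal.absNorm I = n * e ^ 2) : IsSquare (n : ZMod p) := by
  have : Fact p.Prime := ⟨hp⟩
  obtain ⟨M, hM, rfl⟩ := cl_surj y
  rw [← cl_pow _ hM] at hy
  obtain ⟨x, z, hx, hz, e1⟩ := cl_eq I _ hI (pow_ne_zero 2 hM) hy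
  have e2 := congrArg Ideal.absNorm e1
  simp only [map_mul, map_pow, Ideal.absNorm_span_singleton] at e2
  rw [hn] at e2
  obtain ⟨X, Y, c, hc, e3⟩ := h.normform hd (x * z)
  rw [map_mul] at e3
  have hx0 : Algebra.norm ℤ x ≠ 0 := Algebra.norm_ne_zero_iff.mpr hx
  generalize Algebra.norm ℤ x = a at *
  generalize Algebra.norm ℤ z = b at *
  generalize Ideal.absNorm M = m at *
  have e4 : (a.natAbs : ℤ) * (n * e ^ 2) = b.natAbs * m ^ 2 := by exact_mod_cast e2
  have he' : (e : ℤ) ≠ 0 := by exact_mod_cast he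
  have key : (a * n * e ^ 2 = b * m ^ 2) ∨ (a * n * e ^ 2 = - (b * m ^ 2)) := by
    rcases Int.natAbs_eq a with ha | ha <;> rcases Int.natAbs_eq b with hb | hb
    · left; rw [ha, hb]; linear_combination e4
    · right; rw [ha, hb]; linear_combination e4
    · right; rw [ha, hb]; linear_combination - e4
    · left; rw [ha, hb]; linear_combination - e4
  rcases key with key | key
  · have := arith p d n hpd hpd2 (X * m) (Y * m) (a * e * c)
      (mul_ne_zero (mul_ne_zero hx0 he') hc) (by linear_combination m ^ 2 * e3 - a * c ^ 2 * key)
    simpa using this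
  · have h1 := arith p d (-n) hpd hpd2 (X * m) (Y * m) (a * e * c)
      (mul_ne_zero (mul_ne_zero hx0 he') hc) (by linear_combination m ^ 2 * e3 + a * c ^ 2 * key)
    have h2 : IsSquare (-1 : ZMod p) := ZMod.exists_sq_eq_neg_one_iff.mpr (by omega)
    have := h2.mul h1
    simpa using this

theorem isReal (h : QF K d θ τ) (hd : 0 < d) (φ : K →+* ℂ) : ComplexEmbedding.IsReal φ := by
  have hθ : (φ (θ : K)) ^ 2 = ((d : ℝ) : ℂ) := by
    rw [← map_pow]
    have : ((θ : K)) ^ 2 = d := by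
      have := congrArg (algebraMap (𝓞 K) K) h.sq
      rw [pow_two]; simpa using this
    rw [this]; simp
  have hθ0 : φ (θ : K) ≠ 0 := by
    intro h0
    rw [h0] at hθ
    have : d = 0 := by simpa using hθ.symm
    omega
  have hθc : (starRingEnd ℂ) (φ (θ : K)) = φ (θ : K) := by
    have h1 : φ (θ : K) ^ 2 = ((Real.sqrt d : ℝ) : ℂ) ^ 2 := by
      rw [hθ, ← Complex.ofReal_pow, Real.sq_sqrt (by exact_mod_cast hd.le)]
    rcases sq_eq_sq_iff_eq_or_eq_neg.mp h1 with h1 | h1 <;> rw [h1] <;> simp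
  rw [ComplexEmbedding.isReal_iff]
  have : (ComplexEmbedding.conjugate φ).comp (algebraMap (𝓞 K) K) = φ.comp (algebraMap (𝓞 K) K) := by
    ext x
    obtain ⟨t, ht⟩ := h.trace x
    obtain ⟨m, hm⟩ := h.diff x
    have e : 2 * θ * x = t * θ + m := by rw [← ht, ← hm]; ring
    have e1 := congrArg (φ.comp (algebraMap (𝓞 K) K)) e
    simp only [map_mul, map_add, map_intCast, map_ofNat] at e1
    have e2 := congrArg (starRingEnd ℂ) e1
    simp only [map_mul, map_add, map_intCast, map_ofNat] at e2
    simp only [RingHom.comp_apply, ComplexEmbedding.conjugate_coe_eq] at e1 e2 ⊢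
    rw [hθc, ← e1] at e2
    have : (2 : ℂ) * φ (θ : K) ≠ 0 := mul_ne_zero two_ne_zero hθ0
    exact mul_left_cancel₀ this e2
  exact IsLocalization.ringHom_ext (nonZeroDivisors (𝓞 K)) this

theorem rank_eq (h : QF K d θ τ) (hd : 0 < d) : Units.rank K = 1 := by
  have : IsTotallyReal K := ⟨fun w => by
    rw [← InfinitePlace.mk_embedding w, InfinitePlace.isReal_mk_iff]
    exact h.isReal hd _⟩
  have h1 := IsTotallyReal.finrank (K := K)
  rw [h.fr] at h1
  rw [Units.rank, InfinitePlace.card_eq_nrRealPlaces_add_nrComplexPlaces,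
    IsTotallyReal.nrComplexPlaces_eq_zero, ← h1]

theorem tors (h : QF K d θ τ) (hd : 0 < d) (x : (𝓞 K)ˣ) (hx : x ∈ Units.torsion K) : x = 1 ∨ x = -1 := by
  obtain ⟨φ⟩ : Nonempty (K →+* ℂ) := inferInstance
  have hr := h.isReal hd φ
  have h1 := (Units.mem_torsion K).mp hx (InfinitePlace.mk φ)
  rw [InfinitePlace.apply] at h1
  have h2 := RingHom.congr_fun (ComplexEmbedding.isReal_iff.mp hr) ((x : 𝓞 K) : K)
  rw [ComplexEmbedding.conjugate_coe_eq] at h2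
  obtain ⟨r, hr⟩ := Complex.conj_eq_iff_real.mp h2
  rw [hr] at h1
  have h3 : |r| = 1 := by simpa using h1
  have hinj : Function.Injective (fun x : (𝓞 K)ˣ => φ ((x : 𝓞 K) : K)) := by
    intro a b hab
    exact Units.ext (RingOfIntegers.coe_injective (φ.injective hab))
  rcases (abs_eq zero_le_one).mp h3 with h3 | h3
  · left; apply hinj; simp [hr, h3]
  · right; apply hinj; simp [hr, h3]

theorem units (h : QF K d θ τ) (hd : 0 < d) : ∃ ε : (𝓞 K)ˣ, (∀ v, ε ≠ v ^ 2) ∧ (∀ v, ε ≠ - v ^ 2) ∧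
    ∀ u : (𝓞 K)ˣ, ∃ v, u = v ^ 2 ∨ u = - v ^ 2 ∨ u = ε * v ^ 2 ∨ u = - (ε * v ^ 2) := by
  have hr := h.rank_eq hd
  have hun : Unique (Fin (Units.rank K)) := by rw [hr]; infer_instance
  let i0 : Fin (Units.rank K) := default
  let ε := Units.fundSystem K i0
  have hex : ∀ u : (𝓞 K)ˣ, ∃ n : ℤ, u = ε ^ n ∨ u = - ε ^ n := by
    intro u
    obtain ⟨⟨ζ, f⟩, hu, -⟩ := Units.exist_unique_eq_mul_prod K u
    rw [Fintype.prod_unique] at hu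
    refine ⟨f i0, ?_⟩
    rcases h.tors hd ζ ζ.2 with hz | hz
    · left; simp only [hz, one_mul] at hu; exact hu
    · right; simp only [hz, neg_mul, one_mul] at hu; exact hu
  have hneg : (-1 : (𝓞 K)ˣ) ∈ Units.torsion K := by
    exact isOfFinOrder_iff_pow_eq_one.mpr ⟨2, by norm_num, by simp⟩
  have huniq : ∀ (ζ : (𝓞 K)ˣ), ζ ∈ Units.torsion K → ∀ n : ℤ, ε = ζ * ε ^ n → n = 1 := by
    intro ζ hz n hn
    have h1 := Units.fun_eq_repr K (x := ε) (f := fun _ => n) hz (by rw [Fintype.prod_unique]; exact hn)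
    have h2 := Units.fun_eq_repr K (x := ε) (f := fun _ => 1) (one_mem (Units.torsion K))
      (by rw [Fintype.prod_unique, one_mul, zpow_one])
    have := h1.trans h2.symm
    exact congrFun this i0
  have hns : ∀ v, ε ≠ v ^ 2 ∧ ε ≠ - v ^ 2 := by
    intro v
    obtain ⟨n, hv⟩ := hex v
    have hv2 : v ^ 2 = ε ^ (2 * n) := by
      rw [mul_comm, zpow_mul]
      rcases hv with rfl | rfl
      · norm_cast
      · rw [neg_sq]; norm_cast
    rw [hv2]
    constructor
    · intro e
      have := huniq 1 (one_mem _) (2 * n) (by rwa [one_mul])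
      omega
    · intro e
      have := huniq (-1) hneg (2 * n) (by rwa [neg_one_mul])
      omega
  refine ⟨ε, fun v => (hns v).1, fun v => (hns v).2, ?_⟩
  intro u
  obtain ⟨n, hu⟩ := hex u
  rcases Int.even_or_odd' n with ⟨m, rfl | rfl⟩
  · have : ε ^ (2 * m) = (ε ^ m) ^ 2 := by rw [mul_comm, zpow_mul]; norm_cast
    rw [this] at hu
    exact ⟨ε ^ m, by tauto⟩
  · have : ε ^ (2 * m + 1) = ε * (ε ^ m) ^ 2 := by
      rw [zpow_add, mul_comm 2 m, zpow_mul, zpow_one, mul_comm]; norm_cast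
    rw [this] at hu
    exact ⟨ε ^ m, by tauto⟩

end QF


theorem three_dvd (P : ℕ → Prop) (h1 : P 1) (hm : ∀ a b, P a → P b → P (a * b)) (p q s : ℕ)
    (hp : p.Prime) (hq : q.Prime) (hs : s.Prime) (hP : P p) (hQ : P q) (hS : P s)
    (r : ℕ) (hr : r ∣ p * q * s) : P r := by
  obtain ⟨x, c, hx, hc, rfl⟩ := Nat.dvd_mul.mp hr
  obtain ⟨a, b, ha, hb, rfl⟩ := Nat.dvd_mul.mp hx
  have f : ∀ l m : ℕ, l.Prime → P l → m ∣ l → P m := by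
    intro l m hl hPl hml
    rcases (Nat.dvd_prime hl).mp hml with rfl | rfl
    · exact h1
    · exact hPl
  exact hm _ _ (hm _ _ (f p a hp hP ha) (f q b hq hQ hb)) (f s c hs hS hc)

theorem three_dvd' (p q s : ℕ)
    (hp : p.Prime) (hq : q.Prime) (hs : s.Prime) 
    (r : ℕ) (hr : r ∣ p * q * s) : r = 1 ∨ r = p ∨ r = q ∨ r = s ∨ r = p * q ∨ r = p * s ∨ r = q * s
      ∨ r = p * q * s := by
  obtain ⟨x, c, hx, hc, rfl⟩ := Nat.dvd_mul.mp hr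
  obtain ⟨a, b, ha, hb, rfl⟩ := Nat.dvd_mul.mp hx
  rcases (Nat.dvd_prime hp).mp ha with rfl | rfl <;> rcases (Nat.dvd_prime hq).mp hb with rfl | rfl <;>
  rcases (Nat.dvd_prime hs).mp hc with rfl | rfl <;> simp

theorem sq_dvd_of {K : Type*} [Field K] [NumberField K] (a b : 𝓞 K) (h : a ^ 2 ∣ b ^ 2) : a ∣ b :=
  (IsIntegrallyClosed.pow_dvd_pow_iff two_ne_zero).mp h

theorem TT.root {K : Type*} [Field K] [NumberField K] {r : ℤ} (h : TT (𝓞 K) r) :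
    ∃ δ : 𝓞 K, Associated (δ ^ 2) (r : 𝓞 K) := by
  obtain ⟨x, c, hc, h⟩ := h
  have hc' : (c : 𝓞 K) ≠ 0 := by exact_mod_cast hc
  obtain ⟨y, rfl⟩ := sq_dvd_of (c : 𝓞 K) x (by
    refine dvd_trans ?_ h.symm.dvd
    push_cast
    exact Dvd.intro_left _ rfl)
  refine ⟨y, ?_⟩
  obtain ⟨u, hu⟩ := h
  refine ⟨u, ?_⟩
  push_cast at hu
  apply mul_left_cancel₀ (pow_ne_zero 2 hc')
  linear_combination hu

theorem TT.of_unit {R : Type*} [CommRing R] (δ : R) (u : Rˣ) (r : ℤ) (h : δ ^ 2 = u * r) : TT R r := by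
  refine ⟨δ, 1, one_ne_zero, ?_⟩
  rw [h]
  simp only [one_pow, mul_one]
  exact associated_unit_mul_left _ _ u.isUnit

namespace QF
variable {K : Type*} [Field K] [NumberField K] {d : ℤ} {θ : 𝓞 K} {τ : 𝓞 K ≃+* 𝓞 K}

theorem unit_norm (h : QF K d θ τ) (hneg : ∀ (x : 𝓞 K) (n : ℤ), n ≠ 0 → x * τ x ≠ -(n : 𝓞 K) ^ 2)
    (u : (𝓞 K)ˣ) : (u : 𝓞 K) * τ u = 1 := by
  have h1 : IsUnit (Algebra.norm ℤ (u : 𝓞 K)) := u.isUnit.map _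
  rw [← h.norm]
  rcases Int.isUnit_iff.mp h1 with h1 | h1
  · rw [h1]; simp
  · exfalso
    apply hneg u 1 one_ne_zero
    rw [← h.norm, h1]; simp

theorem unit_r (h : QF K d θ τ) (hd : 0 < d)
    (hneg : ∀ (x : 𝓞 K) (n : ℤ), n ≠ 0 → x * τ x ≠ -(n : 𝓞 K) ^ 2) :
    ∃ (ε : (𝓞 K)ˣ) (r : ℕ) (δ : 𝓞 K), Squarefree r ∧ r ≠ 1 ∧ (r : ℤ) ≠ d ∧
      δ ^ 2 = ε * ((r : ℤ) : 𝓞 K) ∧ (r : ℤ) ∣ 4 * d ∧ (d % 4 = 1 → (r : ℤ) ∣ d) ∧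
      ∀ u : (𝓞 K)ˣ, ∃ v, u = v ^ 2 ∨ u = - v ^ 2 ∨ u = ε * v ^ 2 ∨ u = - (ε * v ^ 2) := by
  obtain ⟨ε₀, hs1, hs2, hall⟩ := h.units hd
  obtain ⟨r₀, b, z, hr, hb, hz, e⟩ := h.hilb ε₀ 1 one_ne_zero (by simpa using h.unit_norm hneg ε₀)
  have hb' : (b : 𝓞 K) ≠ 0 := by exact_mod_cast hb
  obtain ⟨δ, rfl⟩ := sq_dvd_of (b : 𝓞 K) z ⟨ε₀ * r₀, by rw [e]; ring⟩
  have e : δ ^ 2 = ε₀ * (r₀ : 𝓞 K) := by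
    apply mul_left_cancel₀ (pow_ne_zero 2 hb')
    linear_combination e
  obtain ⟨ε, r, hrs, hε, e⟩ : ∃ (ε : (𝓞 K)ˣ) (r : ℕ), Squarefree r ∧ (ε = ε₀ ∨ ε = -ε₀) ∧
      δ ^ 2 = ε * ((r : ℤ) : 𝓞 K) := by
    rcases Int.natAbs_eq r₀ with h0 | h0
    · refine ⟨ε₀, r₀.natAbs, Int.squarefree_natAbs.mpr hr, Or.inl rfl, ?_⟩
      rw [← h0, e]
    · refine ⟨-ε₀, r₀.natAbs, Int.squarefree_natAbs.mpr hr, Or.inr rfl, ?_⟩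
      rw [e]
      have : (r₀ : 𝓞 K) = - (((r₀.natAbs : ℕ) : ℤ) : 𝓞 K) := by
        rw [← Int.cast_neg, ← h0]
      rw [this]; push_cast; ring
  have hns : ∀ v : 𝓞 K, v ^ 2 ≠ ε := by
    intro v hv
    have hv2 : IsUnit v := by
      rw [← isUnit_pow_iff (n := 2) two_ne_zero, hv]; exact ε.isUnit
    obtain ⟨w, rfl⟩ := hv2
    have hw : w ^ 2 = ε := Units.ext (by push_cast; exact hv)
    rcases hε with rfl | rfl
    · exact hs1 w hw.symm
    · exact hs2 w (by rw [hw]; simp)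
  have hJ : (Ideal.span {δ}) ^ 2 = Ideal.span {((r : ℤ) : 𝓞 K)} := by
    rw [Ideal.span_singleton_pow, e, Ideal.span_singleton_eq_span_singleton]
    exact associated_unit_mul_left _ _ ε.isUnit
  have hrs' : Squarefree (r : ℤ) := Int.squarefree_natCast.mpr hrs
  have hθ : θ ≠ 0 := by
    rintro rfl
    have h1 := h.sq
    rw [zero_mul] at h1
    have h2 : (0 : ℤ) = d := by exact_mod_cast h1
    omega
  refine ⟨ε, r, δ, hrs, ?_, ?_, e, h.dvd_four _ _ hrs' hJ, fun hd4 => h.dvd_self hd4 _ _ hrs' hJ, ?_⟩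
  · rintro rfl
    exact hns δ (by rw [e]; simp)
  · intro hrd
    rw [hrd, ← h.sq] at e
    obtain ⟨v, rfl⟩ := sq_dvd_of θ δ ⟨ε, by rw [e]; ring⟩
    apply hns v
    apply mul_left_cancel₀ (pow_ne_zero 2 hθ)
    linear_combination e
  · intro u
    obtain ⟨v, hv⟩ := hall u
    refine ⟨v, ?_⟩
    rcases hε with rfl | rfl
    · exact hv
    · simp only [neg_mul, neg_neg]; tauto

theorem dvd_two (r n : ℕ) (hr : Squarefree r) (h : (r : ℤ) ∣ 4 * (n : ℤ)) : r ∣ 2 * n := by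
  have h1 : r ∣ 4 * n := by exact_mod_cast h
  have h2 : r ∣ (2 * n) ^ 2 := h1.trans ⟨n, by ring⟩
  exact (hr.dvd_pow_iff_dvd two_ne_zero).mp h2

/-- The field `ℚ(√s)`, `s ≡ 3 mod 4`. -/
theorem caseF (s : ℕ) (hs : s.Prime) (hs4 : s % 4 = 3) (h : QF K (s : ℤ) θ τ) :
    TT (𝓞 K) 2 ∧ ∀ y : ClassGroup (𝓞 K), y ^ 2 = 1 → y = 1 := by
  have hs0 : (s : ℤ) ≠ 0 := by exact_mod_cast hs.ne_zero
  have hneg := h.norm_ne hs0 s hs hs4 dvd_rfl (by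
    intro h1
    have h2 : s ^ 2 ∣ s ^ 1 := by rw [pow_one]; exact_mod_cast h1
    have := (Nat.pow_dvd_pow_iff_le_right hs.one_lt).mp h2
    omega)
  have hTs : TT (𝓞 K) s := TT.of_sq θ s (by rw [pow_two]; exact h.sq)
  have hT2 : TT (𝓞 K) 2 := by
    obtain ⟨ε, r, δ, hr, hr1, hrs, e, hr4, -, -⟩ := h.unit_r (by positivity) hneg
    have hT := TT.of_unit δ ε r e
    have := dvd_two r s hr hr4
    rcases three_dvd' 2 s 2 Nat.prime_two hs Nat.prime_two r (this.mul_right 2) with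
      rfl | rfl | rfl | rfl | rfl | rfl | rfl | rfl
    · exact absurd rfl hr1
    · exact_mod_cast hT
    · exact absurd rfl hrs
    · exact_mod_cast hT
    · apply TT.cancel hs0
      convert TT.mul hT hTs using 1
      push_cast; ring
    · exfalso
      have := hr 2 dvd_rfl
      simp at this
    · apply TT.cancel hs0
      convert TT.mul hT hTs using 1
      push_cast; ring
    · exfalso
      have := hr 2 ⟨s, by ring⟩
      simp at this
  refine ⟨hT2, ?_⟩
  intro y hy
  obtain ⟨J, r, hJ0, rfl, hr, hJ⟩ := h.genus hneg y hy
  have h4 := h.dvd_four J r (Int.squarefree_natCast.mpr hr) hJ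
  have := dvd_two r s hr h4
  refine TT.cl_eq_one ?_ J hJ0 hJ
  exact three_dvd (fun r => TT (𝓞 K) r) (by simpa using TT.one)
    (fun a b ha hb => by push_cast; exact ha.mul hb) 2 s 2 Nat.prime_two hs Nat.prime_two
    (by exact_mod_cast hT2) hTs (by exact_mod_cast hT2) r (this.mul_right 2)

theorem not_sq_dvd (p m : ℕ) (hp : p.Prime) (hm : ¬ p ∣ m) : ¬ ((p : ℤ) ^ 2 ∣ (p : ℤ) * m) := by
  intro h1
  have h2 : p ^ 2 ∣ p * m := by exact_mod_cast h1
  rw [pow_two] at h2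
  exact hm ((Nat.mul_dvd_mul_iff_left hp.pos).mp h2)

/-- The field `ℚ(√(pq))`, `p ≡ 5 mod 8`, `q ≡ 3 mod 4`, `(q/p) = 1`. -/
theorem caseF' (p q : ℕ) (hp : p.Prime) (hq : q.Prime) (hp8 : p % 8 = 5) (hq4 : q % 4 = 3)
    (hqp : IsSquare (q : ZMod p)) (h : QF K ((p : ℤ) * q) θ τ) :
    (∀ u : (𝓞 K)ˣ, (u : 𝓞 K) * τ u = 1) ∧
    (∃ (ε : (𝓞 K)ˣ) (δ : 𝓞 K), δ ^ 2 = ε * (p : 𝓞 K) ∨ δ ^ 2 = ε * (q : 𝓞 K)) ∧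
    (∀ y : ClassGroup (𝓞 K), y ^ 2 = 1 → ∃ (J : Ideal (𝓞 K)) (r : ℕ), J ≠ 0 ∧ cl J = y ∧
      J ^ 2 = Ideal.span {((r : ℤ) : 𝓞 K)} ∧ r ∣ 2 * p * q) ∧
    (∀ y : ClassGroup (𝓞 K), y ^ 4 = 1 → y ^ 2 = 1) := by
  have hpq : p ≠ q := by rintro rfl; omega
  have hp2 : p ≠ 2 := by rintro rfl; omega
  have hq2 : q ≠ 2 := by rintro rfl; omega
  have : Fact p.Prime := ⟨hp⟩
  have hpz : (p : ℤ) ≠ 0 := by exact_mod_cast hp.ne_zero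
  have hqz : (q : ℤ) ≠ 0 := by exact_mod_cast hq.ne_zero
  have hd0 : (p : ℤ) * q ≠ 0 := mul_ne_zero hpz hqz
  have hqnp : ¬ q ∣ p := fun h => hpq ((Nat.prime_dvd_prime_iff_eq hq hp).mp h).symm
  have hpnq : ¬ p ∣ q := fun h => hpq ((Nat.prime_dvd_prime_iff_eq hp hq).mp h)
  have hneg := h.norm_ne hd0 q hq hq4 (Dvd.intro_left _ rfl) (by
    rw [mul_comm]; exact not_sq_dvd q p hq hqnp)
  have hθ : θ ≠ 0 := by
    rintro rfl
    have h1 := h.sq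
    rw [zero_mul] at h1
    exact hd0 (by exact_mod_cast h1.symm)
  have hq0 : (q : ZMod p) ≠ 0 := by
    rwa [Ne, ZMod.natCast_eq_zero_iff]
  have h2ns : ¬ IsSquare (2 : ZMod p) := by
    intro h2
    have := (ZMod.exists_sq_eq_two_iff hp2).mp h2
    omega
  have h2qns : ¬ IsSquare ((2 * q : ℕ) : ZMod p) := by
    intro h2
    apply h2ns
    have := h2.div hqp
    push_cast at this
    rwa [mul_div_assoc, div_self hq0, mul_one] at this
  have hchi := h.chi hd0 p hp (by omega) (Dvd.intro _ rfl) (not_sq_dvd p q hp hpnq)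
  have hnth : Ideal.absNorm (Ideal.span {θ}) = p * q := by
    have h1 : (Ideal.span {θ}) ^ 2 = Ideal.span {(((p : ℤ) * q : ℤ) : 𝓞 K)} := by
      rw [Ideal.span_singleton_pow, pow_two, h.sq]
    rw [h.absNorm_of_sq _ _ h1, Int.natAbs_mul]; simp
  have heven : ∀ (I : Ideal (𝓞 K)) (hI : I ≠ 0) (y : ClassGroup (𝓞 K)) (hy : cl I = y ^ 2) (r : ℕ),
      Squarefree r → r ∣ 2 * p * q → Ideal.absNorm I = r → r = 1 ∨ r = p ∨ r = q ∨ r = p * q := by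
    intro I hI y hy r hr hr2 hn
    have hI2 : Ideal.span {θ} * I ≠ 0 := mul_ne_zero (span_ne hθ) hI
    have hy2 : cl (Ideal.span {θ} * I) = y ^ 2 := by rw [cl_span_mul _ hθ _ hI, hy]
    have hn2 : Ideal.absNorm (Ideal.span {θ} * I) = p * q * r := by rw [map_mul, hnth, hn]
    rcases three_dvd' 2 p q Nat.prime_two hp hq r hr2 with
      rfl | rfl | rfl | rfl | rfl | rfl | rfl | rfl
    · tauto
    · exact absurd (by simpa using hchi I hI y hy 2 1 one_ne_zero (by rw [hn]; simp)) h2ns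
    · tauto
    · tauto
    · exact absurd (hchi _ hI2 y hy2 (2 * q) p hp.ne_zero (by rw [hn2]; ring)) h2qns
    · exact absurd (hchi _ hI y hy (2 * q) 1 one_ne_zero (by rw [hn]; ring)) h2qns
    · tauto
    · exact absurd (by simpa using hchi _ hI2 y hy2 2 (p * q) (mul_ne_zero hp.ne_zero hq.ne_zero) (by rw [hn2]; ring)) h2ns
  obtain ⟨ε, r, δ, hr, hr1, hrs, e, hr4, -, -⟩ := h.unit_r (by positivity) hneg
  have hδ : δ ≠ 0 := by
    rintro rfl
    have h1 : ((r : ℤ) : 𝓞 K) = 0 := by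
      have : (ε : 𝓞 K) * ((r : ℤ) : 𝓞 K) = 0 := by rw [← e]; simp
      exact (Units.mul_right_eq_zero ε).mp this
    have h2 : r = 0 := by exact_mod_cast h1
    exact hr.ne_zero h2
  have hJ : (Ideal.span {δ}) ^ 2 = Ideal.span {((r : ℤ) : 𝓞 K)} := by
    rw [Ideal.span_singleton_pow, e, Ideal.span_singleton_eq_span_singleton]
    exact associated_unit_mul_left _ _ ε.isUnit
  have hr2 : r ∣ 2 * p * q := by
    rw [mul_assoc]
    exact dvd_two r (p * q) hr (by push_cast; exact hr4)
  have hrpq : r = p ∨ r = q := by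
    have h1 : Ideal.absNorm (Ideal.span {δ}) = r := by simpa using h.absNorm_of_sq _ _ hJ
    rcases heven _ (span_ne hδ) 1 (by rw [cl_span, one_pow]) r hr hr2 h1 with h1 | h1 | h1 | h1
    · exact absurd h1 hr1
    · tauto
    · tauto
    · exfalso; apply hrs; rw [h1]; push_cast; rfl
  have hTr := TT.of_unit δ ε r e
  have hTd : TT (𝓞 K) ((p : ℤ) * q) := TT.of_sq θ _ (by rw [pow_two]; exact h.sq)
  have hTpq : TT (𝓞 K) p ∧ TT (𝓞 K) q := by
    rcases hrpq with rfl | rfl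
    · refine ⟨hTr, TT.cancel hpz ?_⟩
      convert hTr.mul hTd using 1; ring
    · refine ⟨TT.cancel hqz ?_, hTr⟩
      convert hTr.mul hTd using 1; ring
  have hgen : ∀ y : ClassGroup (𝓞 K), y ^ 2 = 1 → ∃ (J : Ideal (𝓞 K)) (r : ℕ), J ≠ 0 ∧ cl J = y ∧
      J ^ 2 = Ideal.span {((r : ℤ) : 𝓞 K)} ∧ r ∣ 2 * p * q ∧ Squarefree r := by
    intro y hy
    obtain ⟨J, r, hJ0, hJ1, hr, hJ⟩ := h.genus hneg y hy
    refine ⟨J, r, hJ0, hJ1, hJ, ?_, hr⟩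
    rw [mul_assoc]
    exact dvd_two r (p * q) hr
      (by push_cast; exact h.dvd_four J r (Int.squarefree_natCast.mpr hr) hJ)
  refine ⟨h.unit_norm hneg, ⟨ε, δ, ?_⟩, ?_, ?_⟩
  · rcases hrpq with rfl | rfl
    · left; rw [e]; simp
    · right; rw [e]; simp
  · intro y hy
    obtain ⟨J, r, h1, h2, h3, h4, -⟩ := hgen y hy
    exact ⟨J, r, h1, h2, h3, h4⟩
  · intro y hy
    obtain ⟨J, r, h1, h2, h3, h4, h5⟩ := hgen (y ^ 2) (by rw [← pow_mul]; exact hy)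
    have h6 : Ideal.absNorm J = r := by simpa using h.absNorm_of_sq _ _ h3
    have h7 := heven J h1 y h2 r h5 h4 h6
    rw [← h2]
    refine TT.cl_eq_one ?_ J h1 h3
    rcases h7 with rfl | rfl | rfl | rfl
    · exact_mod_cast TT.one
    · exact hTpq.1
    · exact hTpq.2
    · push_cast; exact hTd

/-- The field `ℚ(√(pqs))`. -/
theorem casek (p q s : ℕ) (hp : p.Prime) (hq : q.Prime) (hs : s.Prime) (hp4 : p % 4 = 1)
    (hq4 : q % 4 = 3) (hs4 : s % 4 = 3) (hqs : q ≠ s)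
    (h : QF K ((p : ℤ) * q * s) θ τ) :
    (∃ (ε : (𝓞 K)ˣ) (r : ℕ) (δ : 𝓞 K), δ ^ 2 = ε * ((r : ℤ) : 𝓞 K) ∧ r ∣ p * q * s ∧
      ∀ u : (𝓞 K)ˣ, ∃ v, u = v ^ 2 ∨ u = - v ^ 2 ∨ u = ε * v ^ 2 ∨ u = - (ε * v ^ 2)) ∧
    (∀ y : ClassGroup (𝓞 K), y ^ 2 = 1 → ∃ (J : Ideal (𝓞 K)) (r : ℕ), J ≠ 0 ∧ cl J = y ∧
      J ^ 2 = Ideal.span {((r : ℤ) : 𝓞 K)} ∧ r ∣ p * q * s) ∧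
    (∀ y z : ClassGroup (𝓞 K), y ^ 2 = 1 → z ^ 2 = 1 → y = 1 ∨ z = 1 ∨ y = z) := by
  have hpq : p ≠ q := by rintro rfl; omega
  have hps : p ≠ s := by rintro rfl; omega
  have hpz : (p : ℤ) ≠ 0 := by exact_mod_cast hp.ne_zero
  have hqz : (q : ℤ) ≠ 0 := by exact_mod_cast hq.ne_zero
  have hsz : (s : ℤ) ≠ 0 := by exact_mod_cast hs.ne_zero
  have hd0 : (p : ℤ) * q * s ≠ 0 := mul_ne_zero (mul_ne_zero hpz hqz) hsz
  have hqn : ¬ q ∣ p * s := by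
    intro h
    rcases hq.dvd_mul.mp h with h | h
    · exact hpq ((Nat.prime_dvd_prime_iff_eq hq hp).mp h).symm
    · exact hqs ((Nat.prime_dvd_prime_iff_eq hq hs).mp h)
  have hneg := h.norm_ne hd0 q hq hq4 ⟨p * s, by ring⟩ (by
    have := not_sq_dvd q (p * s) hq hqn
    rwa [show (p : ℤ) * q * s = q * ((p * s : ℕ) : ℤ) by push_cast; ring])
  have hd4 : ((p : ℤ) * q * s) % 4 = 1 := by
    have h1 : (p : ℤ) % 4 = 1 := by exact_mod_cast hp4
    have h2 : (q : ℤ) % 4 = 3 := by exact_mod_cast hq4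
    have h3 : (s : ℤ) % 4 = 3 := by exact_mod_cast hs4
    simp [Int.mul_emod, h1, h2, h3]
  obtain ⟨ε, r, δ, hr, hr1, hrs, e, -, hrd, hu⟩ := h.unit_r (by positivity) hneg
  have hrd : r ∣ p * q * s := by have := hrd hd4; exact_mod_cast this
  have hgen : ∀ y : ClassGroup (𝓞 K), y ^ 2 = 1 → ∃ (J : Ideal (𝓞 K)) (r : ℕ), J ≠ 0 ∧ cl J = y ∧
      J ^ 2 = Ideal.span {((r : ℤ) : 𝓞 K)} ∧ r ∣ p * q * s := by
    intro y hy
    obtain ⟨J, r, hJ0, hJ1, hr, hJ⟩ := h.genus hneg y hy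
    refine ⟨J, r, hJ0, hJ1, hJ, ?_⟩
    have := h.dvd_self hd4 J r (Int.squarefree_natCast.mpr hr) hJ
    exact_mod_cast this
  refine ⟨⟨ε, r, δ, e, hrd, hu⟩, hgen, ?_⟩
  have hTr := TT.of_unit δ ε r e
  have hTd : TT (𝓞 K) ((p : ℤ) * q * s) := TT.of_sq θ _ (by rw [pow_two]; exact h.sq)
  have h3 : TT (𝓞 K) p ∨ TT (𝓞 K) q ∨ TT (𝓞 K) s := by
    rcases three_dvd' p q s hp hq hs r hrd with
      rfl | rfl | rfl | rfl | rfl | rfl | rfl | rfl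
    · exact absurd rfl hr1
    · tauto
    · tauto
    · tauto
    · right; right
      apply TT.cancel (mul_ne_zero hpz hqz)
      convert hTr.mul hTd using 1; push_cast; ring
    · right; left
      apply TT.cancel (mul_ne_zero hpz hsz)
      convert hTr.mul hTd using 1; push_cast; ring
    · left
      apply TT.cancel (mul_ne_zero hqz hsz)
      convert hTr.mul hTd using 1; push_cast; ring
    · exfalso; apply hrs; push_cast; rfl
  obtain ⟨t, ht0, ht⟩ : ∃ t : ℤ, t ≠ 0 ∧ ∀ r : ℕ, r ∣ p * q * s → TT (𝓞 K) r ∨ TT (𝓞 K) (r * t) := by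
    have key : ∀ t : ℤ, t ≠ 0 → (TT (𝓞 K) p ∨ TT (𝓞 K) (p * t)) → (TT (𝓞 K) q ∨ TT (𝓞 K) (q * t)) →
        (TT (𝓞 K) s ∨ TT (𝓞 K) (s * t)) → ∀ r : ℕ, r ∣ p * q * s → TT (𝓞 K) r ∨ TT (𝓞 K) (r * t) := by
      intro t ht h1 h2 h3
      refine three_dvd (fun r => TT (𝓞 K) r ∨ TT (𝓞 K) (r * t)) ?_ ?_ p q s hp hq hs h1 h2 h3
      · left; simpa using TT.one
      · intro a b ha hb
        simp only [Nat.cast_mul]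
        rcases ha with ha | ha <;> rcases hb with hb | hb
        · left; exact ha.mul hb
        · right; convert ha.mul hb using 1; ring
        · right; convert ha.mul hb using 1; ring
        · left; apply TT.cancel ht; convert ha.mul hb using 1; ring
    have hsq : ∀ m : ℤ, TT (𝓞 K) (m * m) := fun m => TT.of_sq (m : 𝓞 K) _ (by push_cast; ring)
    rcases h3 with h3 | h3 | h3
    · refine ⟨q, hqz, key q hqz (Or.inl h3) (Or.inr (hsq q)) (Or.inr ?_)⟩
      apply TT.cancel hpz; convert h3.mul hTd using 1; ring
    · refine ⟨p, hpz, key p hpz (Or.inr (hsq p)) (Or.inl h3) (Or.inr ?_)⟩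
      apply TT.cancel hqz; convert h3.mul hTd using 1; ring
    · refine ⟨p, hpz, key p hpz (Or.inr (hsq p)) (Or.inr ?_) (Or.inl h3)⟩
      apply TT.cancel hsz; convert h3.mul hTd using 1; ring
  intro y z hy hz
  obtain ⟨J, a, hJ0, rfl, hJ, ha⟩ := hgen y hy
  obtain ⟨J', b, hJ0', rfl, hJ', hb⟩ := hgen z hz
  rcases ht a ha with h1 | h1
  · left; exact h1.cl_eq_one J hJ0 hJ
  rcases ht b hb with h2 | h2
  · right; left; exact h2.cl_eq_one J' hJ0' hJ'
  right; right
  have hT : TT (𝓞 K) ((a : ℤ) * b) := by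
    apply TT.cancel ht0; convert h1.mul h2 using 1; ring
  have h5 := hT.cl_eq_one (J * J') (mul_ne_zero hJ0 hJ0') (by
    rw [mul_pow, hJ, hJ', Ideal.span_singleton_mul_span_singleton]; push_cast; rfl)
  rw [cl_mul _ _ hJ0 hJ0'] at h5
  rw [pow_two] at hz
  exact mul_right_cancel (h5.trans hz.symm)

end QF


section dede
variable {K : Type*} [Field K] [NumberField K]

theorem eq_of_dvd_absNorm (I J : Ideal (𝓞 K)) (hJ : J ≠ 0) (h : I ∣ J)
    (hn : Ideal.absNorm I = Ideal.absNorm J) : I = J := by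
  obtain ⟨C, rfl⟩ := h
  have hI : Ideal.absNorm I ≠ 0 := by
    intro h0
    apply hJ
    rw [Ideal.absNorm_eq_zero_iff.mp h0, Ideal.bot_mul]; rfl
  rw [map_mul] at hn
  have : Ideal.absNorm C = 1 := by
    have : Ideal.absNorm I * 1 = Ideal.absNorm I * Ideal.absNorm C := by rw [mul_one]; exact hn
    exact (Nat.eq_of_mul_eq_mul_left (Nat.pos_of_ne_zero hI) this).symm
  rw [Ideal.absNorm_eq_one_iff.mp this, Ideal.mul_top]

theorem ideal_sqfree_decomp : ∀ (n : ℕ) (N : Ideal (𝓞 K)), N ≠ 0 → Ideal.absNorm N ≤ n →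
    ∃ B C : Ideal (𝓞 K), N = B ^ 2 * C ∧ Squarefree C := by
  intro n
  induction n with
  | zero =>
    intro N hN h
    exact absurd (Ideal.absNorm_eq_zero_iff.mp (Nat.le_zero.mp h)) hN
  | succ n ih =>
    intro N hN h
    by_cases hs : Squarefree N
    · exact ⟨1, N, by rw [one_pow, one_mul], hs⟩
    · simp only [Squarefree, not_forall] at hs
      obtain ⟨x, ⟨M, hM⟩, hx⟩ := hs
      have hM0 : M ≠ 0 := by rintro rfl; apply hN; rw [hM, mul_zero]
      have hx1 : Ideal.absNorm x ≠ 1 := by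
        intro h1
        exact hx (Ideal.isUnit_iff.mpr (Ideal.absNorm_eq_one_iff.mp h1))
      have hx0 : Ideal.absNorm x ≠ 0 := by
        intro h1
        apply hN
        rw [hM, Ideal.absNorm_eq_zero_iff.mp h1]; simp
      have hMn : Ideal.absNorm M ≠ 0 := fun h1 => hM0 (Ideal.absNorm_eq_zero_iff.mp h1)
      have h2 : Ideal.absNorm N = Ideal.absNorm x * Ideal.absNorm x * Ideal.absNorm M := by
        rw [hM, map_mul, map_mul]
      obtain ⟨B, C, e, hC⟩ := ih M hM0 (by
        have h3 : 2 ≤ Ideal.absNorm x := by omega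
        have h4 : 1 ≤ Ideal.absNorm M := by omega
        have h5 : 2 * 2 ≤ Ideal.absNorm x * Ideal.absNorm x := Nat.mul_le_mul h3 h3
        have h6 := Nat.mul_le_mul_right (Ideal.absNorm M) h5
        omega)
      exact ⟨x * B, C, by rw [hM, e]; ring, hC⟩

end dede

namespace QE
variable {K L : Type*} [Field K] [NumberField K] [Field L] [NumberField L] [Algebra K L]
  {σ : 𝓞 L ≃ₐ[𝓞 K] 𝓞 L}

theorem finr (h : QE K L σ) : Module.finrank (𝓞 K) (𝓞 L) = 2 := by
  rw [← h.deg, IsFractionRing.finrank_eq (𝓞 K) K (𝓞 L) L]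

theorem relNorm_up (h : QE K L σ) (I : Ideal (𝓞 K)) :
    Ideal.relNorm (𝓞 K) (I.map (algebraMap (𝓞 K) (𝓞 L))) = I ^ 2 := by
  rw [Ideal.relNorm_algebraMap, h.finr]

theorem absNorm_rel (I : Ideal (𝓞 L)) : Ideal.absNorm (Ideal.relNorm (𝓞 K) I) = Ideal.absNorm I := by
  rw [Ideal.absNorm_relNorm]

theorem absNorm_up (h : QE K L σ) (I : Ideal (𝓞 K)) :
    Ideal.absNorm (I.map (algebraMap (𝓞 K) (𝓞 L))) = Ideal.absNorm I ^ 2 := by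
  rw [← absNorm_rel (K := K), h.relNorm_up, map_pow]

theorem up_ne (I : Ideal (𝓞 K)) (hI : I ≠ 0) : I.map (algebraMap (𝓞 K) (𝓞 L)) ≠ 0 := by
  intro h0
  exact hI ((Ideal.map_eq_bot_iff_of_injective (FaithfulSMul.algebraMap_injective (𝓞 K) (𝓞 L))).mp h0)

theorem conj_ne (I : Ideal (𝓞 L)) (hI : I ≠ 0) : I.map (σ : 𝓞 L →+* 𝓞 L) ≠ 0 := by
  intro h0
  exact hI ((Ideal.map_eq_bot_iff_of_injective σ.injective).mp h0)

theorem relNorm_ne (I : Ideal (𝓞 L)) (hI : I ≠ 0) : Ideal.relNorm (𝓞 K) I ≠ 0 := by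
  intro h0
  exact hI (Ideal.relNorm_eq_bot_iff.mp h0)

theorem mul_conj (h : QE K L σ) (I : Ideal (𝓞 L)) (hI : I ≠ 0) :
    I * I.map (σ : 𝓞 L →+* 𝓞 L) = (Ideal.relNorm (𝓞 K) I).map (algebraMap (𝓞 K) (𝓞 L)) := by
  apply eq_of_dvd_absNorm _ _ (up_ne _ (relNorm_ne _ hI))
  · rw [Ideal.dvd_iff_le, Ideal.map_relNorm, Ideal.span_le]
    rintro _ ⟨x, hx, rfl⟩
    simp only [Function.comp_apply]
    rw [h.norm]
    exact Ideal.mul_mem_mul hx (Ideal.mem_map_of_mem (σ : 𝓞 L →+* 𝓞 L) hx)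
  · rw [h.absNorm_up, map_mul, absNorm_rel, pow_two]
    congr 1
    rw [← absNorm_rel (K := K)]
    have : Ideal.relNorm (𝓞 K) (I.map (σ : 𝓞 L →+* 𝓞 L)) = Ideal.relNorm (𝓞 K) I :=
      Ideal.relNorm_map_algEquiv σ I
    rw [this, absNorm_rel]

theorem homs (h : QE K L σ) : ∃ (N : ClassGroup (𝓞 L) →* ClassGroup (𝓞 K))
    (j : ClassGroup (𝓞 K) →* ClassGroup (𝓞 L)) (S : ClassGroup (𝓞 L) →* ClassGroup (𝓞 L)),
    (∀ I, I ≠ 0 → N (cl I) = cl (Ideal.relNorm (𝓞 K) I)) ∧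
    (∀ I, I ≠ 0 → j (cl I) = cl (I.map (algebraMap (𝓞 K) (𝓞 L)))) ∧
    (∀ I, I ≠ 0 → S (cl I) = cl (I.map (σ : 𝓞 L →+* 𝓞 L))) ∧
    (∀ a, j (N a) = a * S a) ∧ (∀ y, N (j y) = y ^ 2) := by
  obtain ⟨N, hN⟩ := exists_lift (Ideal.relNorm (𝓞 K) (S := 𝓞 L)) relNorm_ne
    (fun x _ => ⟨_, Ideal.relNorm_singleton _ x⟩)
  obtain ⟨j, hj⟩ := exists_lift (Ideal.mapHom (algebraMap (𝓞 K) (𝓞 L))).toMonoidWithZeroHom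
    up_ne (fun x _ => ⟨algebraMap _ _ x, by
      show Ideal.map _ _ = _
      rw [Ideal.map_span, Set.image_singleton]⟩)
  obtain ⟨S, hS⟩ := exists_lift (Ideal.mapHom (σ : 𝓞 L →+* 𝓞 L)).toMonoidWithZeroHom
    (conj_ne (σ := σ)) (fun x _ => ⟨σ x, by
      show Ideal.map _ _ = _
      rw [Ideal.map_span, Set.image_singleton]; rfl⟩)
  have hj' : ∀ I, I ≠ 0 → j (cl I) = cl (I.map (algebraMap (𝓞 K) (𝓞 L))) := hj
  have hS' : ∀ I, I ≠ 0 → S (cl I) = cl (I.map (σ : 𝓞 L →+* 𝓞 L)) := hS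
  refine ⟨N, j, S, hN, hj', hS', ?_, ?_⟩
  · intro a
    obtain ⟨I, hI, rfl⟩ := cl_surj a
    rw [hN I hI, hj' _ (relNorm_ne I hI), hS' I hI, ← cl_mul _ _ hI (conj_ne (σ := σ) I hI)]
    congr 1
    exact (h.mul_conj I hI).symm
  · intro y
    obtain ⟨I, hI, rfl⟩ := cl_surj y
    rw [hj' I hI, hN _ (up_ne I hI), ← cl_pow _ hI]
    congr 1
    exact h.relNorm_up I

theorem conj_span (x : 𝓞 L) : (Ideal.span {x}).map (σ : 𝓞 L →+* 𝓞 L) = Ideal.span {σ x} := by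
  rw [Ideal.map_span, Set.image_singleton]; rfl

/-- Hilbert 90 for ideals. -/
theorem amb_hilb (h : QE K L σ) (ρ : 𝓞 L) (hρ : ρ ≠ 0) (hσρ : σ ρ = -ρ) (I : Ideal (𝓞 L)) (hI : I ≠ 0)
    (x y : 𝓞 L) (hx : x ≠ 0)
    (e : Ideal.span {x} * I.map (σ : 𝓞 L →+* 𝓞 L) = Ideal.span {y} * I) (hN : y * σ y = x * σ x) :
    ∃ I' : Ideal (𝓞 L), I' ≠ 0 ∧ cl I' = cl I ∧ I'.map (σ : 𝓞 L →+* 𝓞 L) = I' := by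
  have hσx : σ x ≠ 0 := by simpa using hx
  obtain ⟨z, hz, hz2⟩ : ∃ z : 𝓞 L, z ≠ 0 ∧ σ z * y = x * z := by
    by_cases h0 : σ x + y = 0
    · refine ⟨ρ * σ x, mul_ne_zero hρ hσx, ?_⟩
      rw [map_mul, hσρ, h.invol]
      linear_combination - ρ * x * h0
    · refine ⟨σ x + y, h0, ?_⟩
      rw [map_add, h.invol]
      linear_combination hN
  refine ⟨Ideal.span {z} * I, mul_ne_zero (span_ne hz) hI, cl_span_mul z hz I hI, ?_⟩
  rw [Ideal.map_mul, conj_span]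
  apply mul_left_cancel₀ (span_ne hx)
  rw [mul_left_comm, e, ← mul_assoc, ← mul_assoc, Ideal.span_singleton_mul_span_singleton,
    Ideal.span_singleton_mul_span_singleton, hz2]

theorem amb_inv (h : QE K L σ) (I : Ideal (𝓞 L)) (hI : I ≠ 0) (hs : I.map (σ : 𝓞 L →+* 𝓞 L) = I) :
    ∃ (B C : Ideal (𝓞 K)) (J : Ideal (𝓞 L)), B ≠ 0 ∧ C ≠ 0 ∧ J ≠ 0 ∧ Squarefree C ∧
      J ^ 2 = C.map (algebraMap (𝓞 K) (𝓞 L)) ∧ I = B.map (algebraMap (𝓞 K) (𝓞 L)) * J := by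
  have h1 := h.mul_conj I hI
  rw [hs] at h1
  obtain ⟨B, C, e, hC⟩ := ideal_sqfree_decomp _ _ (relNorm_ne (K := K) I hI) le_rfl
  have hB : B ≠ 0 := by
    rintro rfl
    exact relNorm_ne (K := K) I hI (by rw [e]; simp)
  have hC0 : C ≠ 0 := hC.ne_zero
  rw [e, Ideal.map_mul, Ideal.map_pow, ← pow_two] at h1
  obtain ⟨J, rfl⟩ := ideal_sq_dvd _ _ ⟨_, h1⟩
  have hJ : J ≠ 0 := by rintro rfl; simp at hI
  refine ⟨B, C, J, hB, hC0, hJ, hC, ?_, rfl⟩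
  rw [mul_pow] at h1
  exact mul_left_cancel₀ (pow_ne_zero 2 (up_ne B hB)) h1

theorem up_dvd (h : QE K L σ) (C D : Ideal (𝓞 K))
    (hd : C.map (algebraMap (𝓞 K) (𝓞 L)) ∣ D.map (algebraMap (𝓞 K) (𝓞 L))) : C ∣ D := by
  have := map_dvd (Ideal.relNorm (𝓞 K)) hd
  rw [h.relNorm_up, h.relNorm_up] at this
  exact ideal_sq_dvd _ _ this

theorem amb_disc (h : QE K L σ) (C : Ideal (𝓞 K)) (J : Ideal (𝓞 L)) (hJ0 : J ≠ 0) (hC : Squarefree C)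
    (hJ : J ^ 2 = C.map (algebraMap (𝓞 K) (𝓞 L))) (w : 𝓞 L) (a : 𝓞 K)
    (ha : (w - σ w) ^ 2 = algebraMap (𝓞 K) (𝓞 L) a) : a ∈ C := by
  have hcomap : J.comap (algebraMap (𝓞 K) (𝓞 L)) = C := by
    ext m
    rw [Ideal.mem_comap]
    constructor
    · intro hm
      have h2 : (algebraMap (𝓞 K) (𝓞 L) m) ^ 2 ∈ J ^ 2 := Ideal.pow_mem_pow hm 2
      rw [hJ] at h2
      have h3 : C ∣ (Ideal.span {m}) ^ 2 := by
        apply h.up_dvd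
        rw [Ideal.dvd_iff_le, Ideal.map_pow, Ideal.map_span, Set.image_singleton,
          Ideal.span_singleton_pow, Ideal.span_singleton_le_iff_mem]
        exact h2
      have h4 := (hC.dvd_pow_iff_dvd two_ne_zero).mp h3
      rwa [Ideal.dvd_span_singleton] at h4
    · intro hm
      apply Ideal.pow_le_self (n := 2) two_ne_zero
      rw [hJ]; exact Ideal.mem_map_of_mem _ hm
  have hJn : Ideal.absNorm C = Ideal.absNorm J := by
    have h1 := congrArg Ideal.absNorm hJ
    rw [map_pow, h.absNorm_up] at h1
    exact (Nat.pow_left_injective (n := 2) two_ne_zero h1).symm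
  have hstab : ∀ x ∈ J, σ x ∈ J := by
    have : J.map (σ : 𝓞 L →+* 𝓞 L) = J := by
      apply ideal_sq_inj
      rw [← Ideal.map_pow, hJ, Ideal.map_map]
      congr 1
      ext x
      simp
    intro x hx
    rw [← this]
    exact Ideal.mem_map_of_mem (σ : 𝓞 L →+* 𝓞 L) hx
  obtain ⟨b, hb⟩ := surj_aux C J hcomap (fun h0 => hJ0 (Ideal.absNorm_eq_zero_iff.mp h0)) hJn w
  have h2 := hstab _ hb
  rw [map_sub, AlgEquiv.commutes] at h2
  have h3 : w - σ w ∈ J := by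
    have := J.sub_mem hb h2
    simpa using this
  have h4 := Ideal.pow_mem_pow h3 2
  rw [hJ, ha] at h4
  have h5 : C ∣ Ideal.span {a} := by
    apply h.up_dvd
    rw [Ideal.dvd_iff_le, Ideal.map_span, Set.image_singleton, Ideal.span_singleton_le_iff_mem]
    exact h4
  rwa [Ideal.dvd_span_singleton] at h5

end QE


namespace QE
variable {K L : Type*} [Field K] [NumberField K] [Field L] [NumberField L] [Algebra K L]
  {σ : 𝓞 L ≃ₐ[𝓞 K] 𝓞 L}

theorem amb_sign (h : QE K L σ)
    (hη : ∀ u : (𝓞 K)ˣ, ∃ w : (𝓞 L)ˣ, (w : 𝓞 L) * σ w = algebraMap (𝓞 K) (𝓞 L) u ∨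
      (w : 𝓞 L) * σ w = - algebraMap (𝓞 K) (𝓞 L) u)
    (I : Ideal (𝓞 L)) (hI : I ≠ 0) (hc : cl (I.map (σ : 𝓞 L →+* 𝓞 L)) = cl I) :
    ∃ x y : 𝓞 L, x ≠ 0 ∧ y ≠ 0 ∧ Ideal.span {x} * I.map (σ : 𝓞 L →+* 𝓞 L) = Ideal.span {y} * I ∧
      (y * σ y = x * σ x ∨ y * σ y = - (x * σ x)) := by
  obtain ⟨x, y, hx, hy, e⟩ := cl_eq _ _ (conj_ne (σ := σ) I hI) hI hc
  have e2 := congrArg (Ideal.relNorm (𝓞 K)) e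
  have e3 : Ideal.relNorm (𝓞 K) (I.map (σ : 𝓞 L →+* 𝓞 L)) = Ideal.relNorm (𝓞 K) I :=
    Ideal.relNorm_map_algEquiv σ I
  rw [map_mul, map_mul, e3, Ideal.relNorm_singleton, Ideal.relNorm_singleton] at e2
  have e4 := mul_right_cancel₀ (relNorm_ne (K := K) I hI) e2
  rw [Ideal.span_singleton_eq_span_singleton] at e4
  obtain ⟨u, hu⟩ := e4
  have hu2 := congrArg (algebraMap (𝓞 K) (𝓞 L)) hu
  rw [map_mul, h.norm, h.norm] at hu2
  obtain ⟨w, hw⟩ := hη u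
  refine ⟨x * w, y, mul_ne_zero hx w.ne_zero, hy, ?_, ?_⟩
  · rw [← e]
    congr 1
    rw [Ideal.span_singleton_eq_span_singleton]
    exact (associated_mul_unit_right x _ w.isUnit).symm
  · rw [map_mul]
    rcases hw with hw | hw
    · left
      linear_combination - hu2 - x * σ x * hw
    · right
      linear_combination - hu2 + x * σ x * hw

/-- sign-plus classes -/
theorem amb_plus (h : QE K L σ) (ρ : 𝓞 L) (hρ : ρ ≠ 0) (hσρ : σ ρ = -ρ)
    (φ ψ : 𝓞 L) (s m : ℤ) (hsm : IsCoprime s m) (hφ : φ ^ 2 = s) (hψ : ψ ^ 2 = m)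
    (hσφ : σ φ = -φ) (hσψ : σ ψ = -ψ) (I : Ideal (𝓞 L)) (hI : I ≠ 0)
    (x y : 𝓞 L) (hx : x ≠ 0)
    (e : Ideal.span {x} * I.map (σ : 𝓞 L →+* 𝓞 L) = Ideal.span {y} * I) (hN : y * σ y = x * σ x) :
    ∃ (B C : Ideal (𝓞 K)) (J : Ideal (𝓞 L)), B ≠ 0 ∧ C ≠ 0 ∧ J ≠ 0 ∧ C ∣ Ideal.span {2} ∧
      J ^ 2 = C.map (algebraMap (𝓞 K) (𝓞 L)) ∧
      cl I = cl (B.map (algebraMap (𝓞 K) (𝓞 L))) * cl J := by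
  obtain ⟨I', hI', hc, hs⟩ := h.amb_hilb ρ hρ hσρ I hI x y hx e hN
  obtain ⟨B, C, J, hB, hC, hJ, hsq, hJ2, rfl⟩ := h.amb_inv I' hI' hs
  refine ⟨B, C, J, hB, hC, hJ, ?_, hJ2, by rw [← hc, cl_mul _ _ (up_ne B hB) hJ]⟩
  have h1 : ((4 * s : ℤ) : 𝓞 K) ∈ C := by
    apply h.amb_disc C J hJ hsq hJ2 φ
    rw [hσφ, map_intCast]; push_cast
    rw [← hφ]; ring
  have h2 : ((4 * m : ℤ) : 𝓞 K) ∈ C := by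
    apply h.amb_disc C J hJ hsq hJ2 ψ
    rw [hσψ, map_intCast]; push_cast
    rw [← hψ]; ring
  obtain ⟨a, b, hab⟩ := hsm
  have h4 : (4 : 𝓞 K) ∈ C := by
    have h3 := C.add_mem (C.mul_mem_left (a : 𝓞 K) h1) (C.mul_mem_left (b : 𝓞 K) h2)
    have : (a : 𝓞 K) * ((4 * s : ℤ) : 𝓞 K) + (b : 𝓞 K) * ((4 * m : ℤ) : 𝓞 K) = 4 := by
      have : a * (4 * s) + b * (4 * m) = 4 := by linear_combination 4 * hab
      exact_mod_cast congrArg (Int.cast : ℤ → 𝓞 K) this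
    rwa [this] at h3
  apply (hsq.dvd_pow_iff_dvd two_ne_zero).mp
  rw [Ideal.span_singleton_pow, Ideal.dvd_span_singleton]
  convert h4 using 1
  norm_num

theorem amb_final (h : QE K L σ) (h2 : Module.finrank ℚ K = 2) (ρ : 𝓞 L) (hρ : ρ ≠ 0) (hσρ : σ ρ = -ρ)
    (φ ψ : 𝓞 L) (s m : ℤ) (hsm : IsCoprime s m) (hφ : φ ^ 2 = s) (hψ : ψ ^ 2 = m)
    (hσφ : σ φ = -φ) (hσψ : σ ψ = -ψ) (δ : 𝓞 L) (hδ : Associated (δ ^ 2) 2)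
    (hη : ∀ u : (𝓞 K)ˣ, ∃ w : (𝓞 L)ˣ, (w : 𝓞 L) * σ w = algebraMap (𝓞 K) (𝓞 L) u ∨
      (w : 𝓞 L) * σ w = - algebraMap (𝓞 K) (𝓞 L) u)
    (hB : (∃ P : Ideal (𝓞 K), Ideal.absNorm P = 2) → ∀ x y : 𝓞 L, x ≠ 0 → y ≠ 0 →
      y * σ y ≠ - (x * σ x))
    (j : ClassGroup (𝓞 K) →* ClassGroup (𝓞 L)) (S : ClassGroup (𝓞 L) →* ClassGroup (𝓞 L))
    (hj : ∀ I, I ≠ 0 → j (cl I) = cl (I.map (algebraMap (𝓞 K) (𝓞 L))))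
    (hS : ∀ I, I ≠ 0 → S (cl I) = cl (I.map (σ : 𝓞 L →+* 𝓞 L)))
    (a b : ClassGroup (𝓞 L)) (ha : S a = a) (hb : S b = b) (haj : a ∉ j.range) (hbj : b ∉ j.range) :
    a * b ∈ j.range := by
  have habs2 : Ideal.absNorm (Ideal.span {(2 : 𝓞 K)}) = 4 := by
    have := Ideal.absNorm_span_natCast (S := 𝓞 K) 2
    rw [RingOfIntegers.rank, h2] at this
    exact_mod_cast this
  have h20 : Ideal.span {(2 : 𝓞 K)} ≠ 0 := span_ne (by norm_num)
  have hCn : ∀ C : Ideal (𝓞 K), C ∣ Ideal.span {2} → Ideal.absNorm C = 1 ∨ Ideal.absNorm C = 2 ∨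
      Ideal.absNorm C = 4 := by
    intro C hC
    have := map_dvd Ideal.absNorm hC
    rw [habs2] at this
    have hle := Nat.le_of_dvd (by norm_num) this
    interval_cases Ideal.absNorm C <;> simp_all
  have hm2 : (Ideal.span {(2 : 𝓞 K)}).map (algebraMap (𝓞 K) (𝓞 L)) = Ideal.span {δ} ^ 2 := by
    rw [Ideal.map_span, Set.image_singleton, Ideal.span_singleton_pow,
      Ideal.span_singleton_eq_span_singleton]
    have h2' : algebraMap (𝓞 K) (𝓞 L) 2 = 2 := map_ofNat _ 2
    rw [h2']; exact hδ.symm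
  have hcl2 : ∀ J : Ideal (𝓞 L), J ^ 2 = (Ideal.span {(2 : 𝓞 K)}).map (algebraMap (𝓞 K) (𝓞 L)) →
      cl J = 1 := by
    intro J hJ
    rw [hm2] at hJ
    rw [ideal_sq_inj _ _ hJ, cl_span]
  have hCj : ∀ (C : Ideal (𝓞 K)) (J : Ideal (𝓞 L)), C ∣ Ideal.span {2} →
      J ^ 2 = C.map (algebraMap (𝓞 K) (𝓞 L)) → Ideal.absNorm C ≠ 2 → cl J = 1 := by
    intro C J hC hJ hne
    rcases hCn C hC with h1 | h1 | h1
    · rw [Ideal.absNorm_eq_one_iff] at h1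
      subst h1
      rw [Ideal.map_top] at hJ
      have : J = ⊤ := ideal_sq_inj _ _ (by rw [hJ, pow_two, Ideal.top_mul])
      rw [this, ← Ideal.one_eq_top, cl_one]
    · exact absurd h1 hne
    · apply hcl2
      rw [hJ, eq_of_dvd_absNorm C _ h20 hC (by rw [h1, habs2])]
  have hprime : ∀ C : Ideal (𝓞 K), Ideal.absNorm C = 2 → Prime C := by
    intro C hC
    refine Ideal.prime_of_isPrime ?_ (Ideal.isPrime_of_irreducible_absNorm ?_)
    · rintro rfl; simp at hC
    · rw [hC]; exact Nat.prime_two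
  obtain ⟨I, hI, rfl⟩ := cl_surj a
  obtain ⟨I', hI', rfl⟩ := cl_surj b
  rw [hS I hI] at ha
  rw [hS I' hI'] at hb
  obtain ⟨x, y, hx, hy, e, hs⟩ := h.amb_sign hη I hI ha
  obtain ⟨x', y', hx', hy', e', hs'⟩ := h.amb_sign hη I' hI' hb
  have plus := h.amb_plus ρ hρ hσρ φ ψ s m hsm hφ hψ hσφ hσψ
  by_cases hex : ∃ P : Ideal (𝓞 K), Ideal.absNorm P = 2
  · have hB' := hB hex
    have hs1 := hs.resolve_right (hB' x y hx hy)
    have hs2 := hs'.resolve_right (hB' x' y' hx' hy')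
    obtain ⟨B, C, J, hB0, hC0, hJ0, hC2, hJ2, ec⟩ := plus I hI x y hx e hs1
    obtain ⟨B', C', J', hB0', hC0', hJ0', hC2', hJ2', ec'⟩ := plus I' hI' x' y' hx' e' hs2
    have hn : Ideal.absNorm C = 2 := by
      by_contra hne
      apply haj
      exact ⟨cl B, by rw [hj B hB0, ec, hCj C J hC2 hJ2 hne, mul_one]⟩
    have hn' : Ideal.absNorm C' = 2 := by
      by_contra hne
      apply hbj
      exact ⟨cl B', by rw [hj B' hB0', ec', hCj C' J' hC2' hJ2' hne, mul_one]⟩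
    have hJJ : ∃ D, j D = cl J * cl J' := by
      by_cases hCC : C = C'
      · subst hCC
        have : J' = J := ideal_sq_inj _ _ (by rw [hJ2, hJ2'])
        subst this
        exact ⟨cl C, by rw [hj C hC0, ← hJ2, cl_pow _ hJ0, pow_two]⟩
      · have hdv : C * C' ∣ Ideal.span {2} := by
          obtain ⟨D, hD⟩ := hC2
          have h3 : C' ∣ C * D := hD ▸ hC2'
          rcases (hprime C' hn').dvd_or_dvd h3 with h3 | h3
          · exact absurd (eq_of_dvd_absNorm _ _ hC0 h3 (by rw [hn, hn'])).symm hCC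
          · rw [hD]; exact mul_dvd_mul_left C h3
        have heq := eq_of_dvd_absNorm _ _ h20 hdv (by rw [map_mul, hn, hn', habs2])
        refine ⟨1, ?_⟩
        rw [map_one, ← cl_mul _ _ hJ0 hJ0', hcl2]
        rw [mul_pow, hJ2, hJ2', ← Ideal.map_mul, heq]
    obtain ⟨D, hD⟩ := hJJ
    refine ⟨cl B * cl B' * D, ?_⟩
    rw [map_mul, map_mul, hD, hj B hB0, hj B' hB0', ec, ec', mul_mul_mul_comm]
  · have hno : ∀ (I : Ideal (𝓞 L)) (hI : I ≠ 0) (x y : 𝓞 L) (_ : x ≠ 0)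
      (_ : Ideal.span {x} * I.map (σ : 𝓞 L →+* 𝓞 L) = Ideal.span {y} * I) (_ : y * σ y = x * σ x),
        cl I ∈ j.range := by
      intro I hI x y hx e hN
      obtain ⟨B, C, J, hB0, hC0, hJ0, hC2, hJ2, ec⟩ := plus I hI x y hx e hN
      exact ⟨cl B, by rw [hj B hB0, ec, hCj C J hC2 hJ2 (fun h0 => hex ⟨C, h0⟩), mul_one]⟩
    have hs1 := hs.resolve_left (fun h0 => haj (hno I hI x y hx e h0))
    have hs2 := hs'.resolve_left (fun h0 => hbj (hno I' hI' x' y' hx' e' h0))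
    rw [← cl_mul _ _ hI hI']
    apply hno (I * I') (mul_ne_zero hI hI') (x * x') (y * y') (mul_ne_zero hx hx')
    · rw [Ideal.map_mul, ← Ideal.span_singleton_mul_span_singleton,
        ← Ideal.span_singleton_mul_span_singleton, mul_mul_mul_comm, e, e', mul_mul_mul_comm]
    · rw [map_mul, map_mul]
      linear_combination y' * σ y' * hs1 - x * σ x * hs2

end QE


theorem two_adic_sqrt (d : ℤ) (hd : d % 8 = 1) : ∀ n : ℕ, ∃ r : ℤ, r % 2 = 1 ∧ (2 : ℤ) ^ (n + 3) ∣ r ^ 2 - d := by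
  intro n
  induction n with
  | zero => exact ⟨1, by norm_num, by norm_num; omega⟩
  | succ n ih =>
    obtain ⟨r, hr, k, hk⟩ := ih
    rcases Int.emod_two_eq_zero_or_one k with h0 | h0
    · refine ⟨r, hr, k / 2, ?_⟩
      rw [hk, pow_succ (2 : ℤ) (n + 3)]
      have : k = 2 * (k / 2) := by omega
      linear_combination (2 : ℤ) ^ (n + 3) * this
    · refine ⟨r + 2 ^ (n + 2), ?_, ?_⟩
      · rw [pow_succ]; omega
      · have h1 : (k + r) = 2 * ((k + r) / 2) := by omega
        refine ⟨(k + r) / 2 + 2 ^ n, ?_⟩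
        have e1 : (2 : ℤ) ^ (n + 3) = 8 * 2 ^ n := by ring
        have e2 : (2 : ℤ) ^ (n + 2) = 4 * 2 ^ n := by ring
        have e3 : (2 : ℤ) ^ (n + 1 + 3) = 16 * 2 ^ n := by ring
        rw [e1] at hk
        rw [e2, e3]
        linear_combination hk + 8 * 2 ^ n * h1

theorem sq_emod8 (x : ℤ) : (x % 2 = 0 ∧ (x ^ 2) % 4 = 0) ∨ (x % 2 = 1 ∧ (x ^ 2) % 8 = 1) := by
  rcases Int.emod_two_eq_zero_or_one x with h | h
  · left; refine ⟨h, ?_⟩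
    obtain ⟨y, rfl⟩ := Int.dvd_of_emod_eq_zero h
    ring_nf; omega
  · right; refine ⟨h, ?_⟩
    obtain ⟨y, rfl⟩ : ∃ y, x = 2 * y + 1 := ⟨x / 2, by omega⟩
    obtain ⟨z, hz⟩ := Int.even_mul_succ_self y
    have : (2 * y + 1) ^ 2 = 8 * z + 1 := by linear_combination 4 * hz
    omega

theorem two_adic_aniso (s : ℤ) (hs : s % 4 = 3) : ∀ (n : ℕ) (X Y Z W : ℤ),
    2 * (4 : ℤ) ^ n ∣ X ^ 2 + Y ^ 2 - s * (Z ^ 2 + W ^ 2) →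
    (2 : ℤ) ^ n ∣ X ∧ (2 : ℤ) ^ n ∣ Y ∧ (2 : ℤ) ^ n ∣ Z ∧ (2 : ℤ) ^ n ∣ W := by
  intro n
  induction n with
  | zero => intro X Y Z W _; simp
  | succ n ih =>
    intro X Y Z W h
    obtain ⟨t, rfl⟩ : ∃ t, s = 4 * t + 3 := ⟨s / 4, by omega⟩
    have h8 : (8 : ℤ) ∣ X ^ 2 + Y ^ 2 - (4 * t + 3) * (Z ^ 2 + W ^ 2) :=
      dvd_trans ⟨4 ^ n, by ring⟩ h
    have hE : X % 2 = 0 ∧ Y % 2 = 0 ∧ Z % 2 = 0 ∧ W % 2 = 0 := by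
      have e : (4 * t + 3) * (Z ^ 2 + W ^ 2) = 4 * (t * (Z ^ 2 + W ^ 2)) + 3 * Z ^ 2 + 3 * W ^ 2 := by ring
      rw [e] at h8
      rcases sq_emod8 X with ⟨h1, h2⟩ | ⟨h1, h2⟩ <;> rcases sq_emod8 Y with ⟨h3, h4⟩ | ⟨h3, h4⟩ <;>
      rcases sq_emod8 Z with ⟨h5, h6⟩ | ⟨h5, h6⟩ <;> rcases sq_emod8 W with ⟨h7, h8'⟩ | ⟨h7, h8'⟩ <;>
      first
      | exact ⟨h1, h3, h5, h7⟩
      | (exfalso; generalize t * (Z ^ 2 + W ^ 2) = T at h8; omega)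
      | (exfalso
         have : (t * (Z ^ 2 + W ^ 2)) % 2 = 0 := by
           apply Int.emod_eq_zero_of_dvd
           apply Dvd.dvd.mul_left
           apply Int.dvd_of_emod_eq_zero
           omega
         generalize t * (Z ^ 2 + W ^ 2) = T at h8 this
         omega)
    obtain ⟨h1, h2, h3, h4⟩ := hE
    obtain ⟨X, rfl⟩ := Int.dvd_of_emod_eq_zero h1
    obtain ⟨Y, rfl⟩ := Int.dvd_of_emod_eq_zero h2
    obtain ⟨Z, rfl⟩ := Int.dvd_of_emod_eq_zero h3
    obtain ⟨W, rfl⟩ := Int.dvd_of_emod_eq_zero h4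
    obtain ⟨c, hc⟩ := h
    obtain ⟨i1, i2, i3, i4⟩ := ih X Y Z W ⟨c, by
      have : (4 : ℤ) * (X ^ 2 + Y ^ 2 - (4 * t + 3) * (Z ^ 2 + W ^ 2)) = 4 * (2 * 4 ^ n * c) := by
        rw [pow_succ] at hc
        linear_combination hc
      exact mul_left_cancel₀ (by norm_num) this⟩
    rw [pow_succ, mul_comm]
    exact ⟨mul_dvd_mul_left 2 i1, mul_dvd_mul_left 2 i2, mul_dvd_mul_left 2 i3, mul_dvd_mul_left 2 i4⟩

theorem int_eq_zero_of_pow (x : ℤ) (h : ∀ n : ℕ, (2 : ℤ) ^ n ∣ x) : x = 0 := by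
  by_contra hx
  have h1 := h x.natAbs
  have h2 := Int.natAbs_dvd_natAbs.mpr h1
  have h3 := Nat.le_of_dvd (Int.natAbs_pos.mpr hx) h2
  rw [Int.natAbs_pow] at h3
  have := Nat.lt_two_pow_self (n := x.natAbs)
  simp at h3
  omega

theorem int_sq_zero (d : ℤ) (hns : ¬ IsSquare d) (a b : ℤ) (h : a ^ 2 = b ^ 2 * d) : a = 0 ∧ b = 0 := by
  have hb : b = 0 := by
    by_contra hb
    obtain ⟨c, rfl⟩ := (Int.pow_dvd_pow_iff two_ne_zero).mp (Dvd.intro d h.symm : b ^ 2 ∣ a ^ 2)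
    apply hns
    refine ⟨c, ?_⟩
    apply mul_left_cancel₀ (pow_ne_zero 2 hb)
    linear_combination -h
  subst hb
  refine ⟨?_, rfl⟩
  simpa using h

/-- anisotropy of `X² + Y² - s(Z² + W²)` over `ℤ[√d]` for `d ≡ 1 mod 8`, in integer coordinates. -/
theorem aniso_d (d s : ℤ) (hd : d % 8 = 1) (hs : s % 4 = 3) (hns : ¬ IsSquare d)
    (x x' y y' z z' w w' : ℤ)
    (e1 : x ^ 2 + d * x' ^ 2 + (y ^ 2 + d * y' ^ 2) = s * (z ^ 2 + d * z' ^ 2 + (w ^ 2 + d * w' ^ 2)))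
    (e2 : x * x' + y * y' = s * (z * z' + w * w')) :
    (z = 0 ∧ z' = 0) ∧ (x = 0 ∧ x' = 0) := by
  have key : ∀ n : ℕ, ∃ r : ℤ, (2 : ℤ) ^ n ∣ r ^ 2 - d ∧ (2 : ℤ) ^ n ∣ x + x' * r ∧ (2 : ℤ) ^ n ∣ z + z' * r := by
    intro n
    obtain ⟨r, -, k, hk⟩ := two_adic_sqrt d hd (2 * n)
    have e8 : (2 : ℤ) ^ (2 * n + 3) = 2 * 4 ^ n * 4 := by
      rw [pow_add, pow_mul]; norm_num; ring
    have hdv : 2 * (4 : ℤ) ^ n ∣ (x + x' * r) ^ 2 + (y + y' * r) ^ 2 - s * ((z + z' * r) ^ 2 + (w + w' * r) ^ 2) := by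
      refine ⟨4 * k * (x' ^ 2 + y' ^ 2 - s * (z' ^ 2 + w' ^ 2)), ?_⟩
      rw [e8] at hk
      linear_combination e1 + 2 * r * e2 + (x' ^ 2 + y' ^ 2 - s * (z' ^ 2 + w' ^ 2)) * hk
    obtain ⟨h1, -, h3, -⟩ := two_adic_aniso s hs n _ _ _ _ hdv
    refine ⟨r, dvd_trans ?_ ⟨k, hk⟩, h1, h3⟩
    exact pow_dvd_pow _ (by omega)
  have gen : ∀ a b : ℤ, (∀ n : ℕ, ∃ r : ℤ, (2 : ℤ) ^ n ∣ r ^ 2 - d ∧ (2 : ℤ) ^ n ∣ a + b * r) →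
      a = 0 ∧ b = 0 := by
    intro a b hab
    apply int_sq_zero d hns
    have := int_eq_zero_of_pow (a ^ 2 - b ^ 2 * d) (by
      intro n
      obtain ⟨r, ⟨k, hk⟩, ⟨l, hl⟩⟩ := hab n
      refine ⟨l * (a - b * r) + b ^ 2 * k, ?_⟩
      linear_combination (a - b * r) * hl + b ^ 2 * hk)
    linarith
  constructor
  · apply gen; intro n; obtain ⟨r, h1, h2, h3⟩ := key n; exact ⟨r, h1, h3⟩
  · apply gen; intro n; obtain ⟨r, h1, h2, h3⟩ := key n; exact ⟨r, h1, h2⟩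

theorem QF.mod8 {K : Type*} [Field K] [NumberField K] {d : ℤ} {θ : 𝓞 K} {τ : 𝓞 K ≃+* 𝓞 K}
    (h : QF K d θ τ) (hd : d % 4 = 1) (P : Ideal (𝓞 K)) (hP : Ideal.absNorm P = 2) : d % 8 = 1 := by
  obtain ⟨w, -, hw⟩ := h.exists_half hd
  have hP1 : (1 : 𝓞 K) ∉ P := by
    intro h1
    rw [(Ideal.eq_top_iff_one P).mpr h1] at hP
    simp at hP
  have h2 : (2 : 𝓞 K) ∈ P := by
    have := Ideal.absNorm_mem P
    rw [hP] at this
    exact_mod_cast this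
  have hww : w ^ 2 - w ∈ P := by
    have hc : Nat.card (𝓞 K ⧸ P) = 2 := hP
    obtain ⟨y, -, huniq⟩ := (Nat.card_eq_two_iff' (0 : 𝓞 K ⧸ P)).mp hc
    by_cases h0 : w ∈ P
    · exact P.sub_mem (Ideal.pow_mem_of_mem P h0 2 (by norm_num)) h0
    · have e1 := huniq (Ideal.Quotient.mk P w) (by show _ ≠ _; rwa [ne_eq, Ideal.Quotient.eq_zero_iff_mem])
      have e2 := huniq (Ideal.Quotient.mk P 1) (by show _ ≠ _; rwa [ne_eq, Ideal.Quotient.eq_zero_iff_mem])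
      have e3 := Ideal.Quotient.eq.mp (e1.trans e2.symm)
      have := P.mul_mem_left w e3
      rwa [show w * (w - 1) = w ^ 2 - w by ring] at this
  rw [hw] at hww
  by_contra hne
  have hodd : ((d - 1) / 4) % 2 = 1 := by omega
  apply hP1
  have h3 := P.sub_mem hww (P.mul_mem_left (((((d - 1) / 4) / 2 : ℤ)) : 𝓞 K) h2)
  have e : (d - 1) / 4 - ((d - 1) / 4) / 2 * 2 = 1 := by omega
  have e' := congrArg (Int.cast : ℤ → 𝓞 K) e
  push_cast at e'
  rwa [e'] at h3

theorem QE.no_minus {K L : Type*} [Field K] [NumberField K] [Field L] [NumberField L] [Algebra K L]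
    {σ : 𝓞 L ≃ₐ[𝓞 K] 𝓞 L} {d : ℤ} {θ : 𝓞 K} {τ : 𝓞 K ≃+* 𝓞 K}
    (h : QE K L σ) (hk : QF K d θ τ) (hd : d % 4 = 1) (hns : ¬ IsSquare d) (s : ℤ) (hs : s % 4 = 3)
    (φ : 𝓞 L) (hφ : φ ^ 2 = s) (hσφ : σ φ = -φ)
    (hex : ∃ P : Ideal (𝓞 K), Ideal.absNorm P = 2) (x y : 𝓞 L) (hx : x ≠ 0) (_hy : y ≠ 0) :
    y * σ y ≠ - (x * σ x) := by
  intro e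
  obtain ⟨P, hP⟩ := hex
  have hd8 := hk.mod8 hd P hP
  have hs0 : s ≠ 0 := by rintro rfl; norm_num at hs
  have hd0 : d ≠ 0 := by rintro rfl; norm_num at hd
  have hsL : (s : 𝓞 L) ≠ 0 := by exact_mod_cast hs0
  have hφ0 : φ ≠ 0 := by rintro rfl; apply hsL; rw [← hφ]; simp
  have inj := FaithfulSMul.algebraMap_injective (𝓞 K) (𝓞 L)
  have dec : ∀ z : 𝓞 L, ∃ A B : 𝓞 K, z + σ z = algebraMap _ _ A ∧ φ * (z - σ z) = algebraMap _ _ B := by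
    intro z
    obtain ⟨A, hA⟩ := h.fix (z + σ z) (by rw [map_add, h.invol]; ring)
    obtain ⟨B, hB⟩ := h.fix (φ * (z - σ z)) (by rw [map_mul, map_sub, h.invol, hσφ]; ring)
    exact ⟨A, B, hA, hB⟩
  have dec2 : ∀ z : 𝓞 K, ∃ a b : ℤ, ((2 * d : ℤ) : 𝓞 K) * z = a + b * θ := by
    intro z
    obtain ⟨t, ht⟩ := hk.trace z
    obtain ⟨m, hm⟩ := hk.diff z
    refine ⟨d * t, m, ?_⟩
    push_cast
    rw [← ht, ← hm, ← hk.sq]; ring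
  obtain ⟨A, B, hA, hB⟩ := dec x
  obtain ⟨A', B', hA', hB'⟩ := dec y
  have eq1 : B ^ 2 + B' ^ 2 = s * (A ^ 2 + A' ^ 2) := by
    apply inj
    rw [map_add, map_mul, map_add, map_pow, map_pow, map_pow, map_pow, map_intCast, ← hA, ← hB, ← hA', ← hB']
    linear_combination ((x - σ x) ^ 2 + (y - σ y) ^ 2) * hφ - 4 * s * e
  obtain ⟨a, a', ha⟩ := dec2 A
  obtain ⟨b, b', hb⟩ := dec2 B
  obtain ⟨c, c', hc⟩ := dec2 A'
  obtain ⟨f, f', hf⟩ := dec2 B'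
  have lin : ∀ u v : ℤ, (u : 𝓞 K) + v * θ = 0 → u = 0 ∧ v = 0 := by
    intro u v huv
    have h1 := congrArg τ huv
    rw [map_add, map_mul, hk.conjθ, map_zero, map_intCast, map_intCast] at h1
    have h2 : ((u ^ 2 : ℤ) : 𝓞 K) = ((v ^ 2 * d : ℤ) : 𝓞 K) := by
      push_cast
      rw [← hk.sq]
      linear_combination (u - v * θ) * huv
    exact int_sq_zero d hns u v (by exact_mod_cast h2)
  obtain ⟨e1, e2⟩ := lin (b ^ 2 + d * b' ^ 2 + (f ^ 2 + d * f' ^ 2) - s * (a ^ 2 + d * a' ^ 2 + (c ^ 2 + d * c' ^ 2)))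
    (2 * (b * b' + f * f' - s * (a * a' + c * c'))) (by
      push_cast
      rw [← hk.sq]
      have := congrArg (fun z => ((2 * d : ℤ) : 𝓞 K) ^ 2 * z) eq1
      have h2 : (((2 * d : ℤ) : 𝓞 K) * B) ^ 2 + (((2 * d : ℤ) : 𝓞 K) * B') ^ 2 =
        s * ((((2 * d : ℤ) : 𝓞 K) * A) ^ 2 + (((2 * d : ℤ) : 𝓞 K) * A') ^ 2) := by
        linear_combination this
      rw [ha, hb, hc, hf] at h2
      linear_combination h2)
  obtain ⟨⟨r1, r2⟩, ⟨r3, r4⟩⟩ := aniso_d d s hd8 hs hns b b' f f' a a' c c' (by linarith) (by linarith)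
  subst r1 r2 r3 r4
  have h2d : ((2 * d : ℤ) : 𝓞 K) ≠ 0 := by exact_mod_cast (mul_ne_zero two_ne_zero hd0)
  have hA0 : A = 0 := by
    have : ((2 * d : ℤ) : 𝓞 K) * A = 0 := by rw [ha]; simp
    exact (mul_eq_zero.mp this).resolve_left h2d
  have hB0 : B = 0 := by
    have : ((2 * d : ℤ) : 𝓞 K) * B = 0 := by rw [hb]; simp
    exact (mul_eq_zero.mp this).resolve_left h2d
  rw [hA0, map_zero] at hA
  rw [hB0, map_zero] at hB
  have h3 := (mul_eq_zero.mp hB).resolve_left hφ0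
  have : (2 : 𝓞 L) * x = 0 := by linear_combination hA + h3
  exact hx ((mul_eq_zero.mp this).resolve_left two_ne_zero)


theorem exists_prime_ideal {L : Type*} [Field L] [NumberField L] (D s m : ℤ) (φ ψ : 𝓞 L)
    (hφ : φ ^ 2 = s) (hψ : ψ ^ 2 = m)
    (hω : ∀ ω : 𝓞 L, ∃ a b c e : ℤ, (D : 𝓞 L) * ω = a + b * φ + c * ψ + e * (φ * ψ))
    (l : ℕ) (hl : l.Prime) (hD : ¬ (l : ℤ) ∣ D)
    (h1 : IsSquare (s : ZMod l)) (h2 : IsSquare (m : ZMod l)) :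
    ∃ P : Ideal (𝓞 L), P ≠ 0 ∧ Ideal.absNorm P = l := by
  have : Fact l.Prime := ⟨hl⟩
  have hl0 : (l : 𝓞 L) ≠ 0 := by exact_mod_cast hl.ne_zero
  have hnu : ¬ IsUnit (l : 𝓞 L) := by
    intro hu
    have h3 : IsUnit (Algebra.norm ℤ (l : 𝓞 L)) := hu.map _
    have h4 := Ideal.absNorm_span_natCast (S := 𝓞 L) l
    have h5 : Ideal.span {(l : 𝓞 L)} = ⊤ := Ideal.span_singleton_eq_top.mpr hu
    rw [h5, Ideal.absNorm_top] at h4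
    have hpos : 0 < Module.finrank ℤ (𝓞 L) := by
      rw [RingOfIntegers.rank]; exact Module.finrank_pos
    have := Nat.one_lt_pow hpos.ne' hl.one_lt
    omega
  obtain ⟨M, hM, hlM⟩ := exists_max_ideal_of_mem_nonunits hnu
  let R := 𝓞 L ⧸ M
  let _ : Field R := Ideal.Quotient.field M
  have hlR : (l : R) = 0 := by
    have : Ideal.Quotient.mk M (l : 𝓞 L) = 0 := Ideal.Quotient.eq_zero_iff_mem.mpr hlM
    simpa using this
  have hc : CharP R l := (CharP.charP_iff_prime_eq_zero hl).mpr hlR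
  let f : ZMod l →+* R := ZMod.castHom dvd_rfl R
  have hfi : ∀ n : ℤ, f n = Ideal.Quotient.mk M (n : 𝓞 L) := by
    intro n
    rw [map_intCast, map_intCast]
  have hroot : ∀ (χ : 𝓞 L) (n : ℤ), χ ^ 2 = n → IsSquare (n : ZMod l) → ∃ a : ZMod l,
      f a = Ideal.Quotient.mk M χ := by
    intro χ n e ⟨a, ha⟩
    have h3 : (Ideal.Quotient.mk M χ) ^ 2 = (f a) ^ 2 := by
      rw [← map_pow, e, ← hfi, ha, map_mul, pow_two]
    rcases sq_eq_sq_iff_eq_or_eq_neg.mp h3 with h3 | h3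
    · exact ⟨a, h3.symm⟩
    · exact ⟨-a, by rw [map_neg, h3]⟩
  obtain ⟨x, hx⟩ := hroot φ s hφ h1
  obtain ⟨y, hy⟩ := hroot ψ m hψ h2
  have hDz : (D : ZMod l) ≠ 0 := by
    rwa [ne_eq, ZMod.intCast_zmod_eq_zero_iff_dvd]
  have hsurj : Function.Surjective f := by
    intro r
    obtain ⟨ω, rfl⟩ := Ideal.Quotient.mk_surjective r
    obtain ⟨a, b, c, e, hh⟩ := hω ω
    refine ⟨(D : ZMod l)⁻¹ * (a + b * x + c * y + e * (x * y)), ?_⟩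
    have h3 := congrArg (Ideal.Quotient.mk M) hh
    rw [map_mul, map_add, map_add, map_add, map_mul, map_mul, map_mul, map_mul, ← hfi, ← hfi, ← hfi,
      ← hfi, ← hfi, ← hx, ← hy] at h3
    have hDf : f (D : ZMod l) ≠ 0 := (map_ne_zero f).mpr hDz
    apply mul_left_cancel₀ hDf
    rw [h3, ← map_mul, mul_inv_cancel_left₀ hDz]
    simp only [map_add, map_mul]
  have hbij : Function.Bijective f := ⟨f.injective, hsurj⟩
  have hcard := Nat.card_eq_of_bijective f hbij
  rw [Nat.card_zmod] at hcard
  refine ⟨M, ?_, hcard.symm⟩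
  rintro rfl
  exact hl0 (by simpa using hlM)

theorem exists_nonres (p : ℕ) (hp : p.Prime) (hp2 : p ≠ 2) : ∃ a : ℕ, ¬ IsSquare (a : ZMod p) := by
  have : Fact p.Prime := ⟨hp⟩
  obtain ⟨a, ha⟩ := FiniteField.exists_nonsquare (F := ZMod p) (by rwa [ZMod.ringChar_zmod_n])
  exact ⟨a.val, by rwa [ZMod.natCast_zmod_val]⟩

theorem exists_dirichlet (p q s : ℕ) (hp : p.Prime) (hq : q.Prime) (hs : s.Prime)
    (hpq : p ≠ q) (hps : p ≠ s) (hqs : q ≠ s) (hp2 : p ≠ 2) (hq2 : q ≠ 2) (hs2 : s ≠ 2) (n : ℕ) :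
    ∃ l : ℕ, n < l ∧ l.Prime ∧ ¬ IsSquare (l : ZMod p) ∧ IsSquare (s : ZMod l) ∧
      IsSquare ((p * q : ℕ) : ZMod l) := by
  have fp : Fact p.Prime := ⟨hp⟩
  have fq : Fact q.Prime := ⟨hq⟩
  have fs : Fact s.Prime := ⟨hs⟩
  obtain ⟨a, ha⟩ := exists_nonres p hp hp2
  obtain ⟨b, hb⟩ := exists_nonres q hq hq2
  have c1 : Nat.Coprime p q := (Nat.coprime_primes hp hq).mpr hpq
  have c2 : Nat.Coprime (p * q) (4 * s) := by
    have c3 : Nat.Coprime p 4 := by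
      rw [show (4 : ℕ) = 2 ^ 2 by norm_num]
      exact ((Nat.coprime_primes hp Nat.prime_two).mpr hp2).pow_right 2
    have c4 : Nat.Coprime q 4 := by
      rw [show (4 : ℕ) = 2 ^ 2 by norm_num]
      exact ((Nat.coprime_primes hq Nat.prime_two).mpr hq2).pow_right 2
    exact Nat.Coprime.mul_left (c3.mul_right ((Nat.coprime_primes hp hs).mpr hps))
      (c4.mul_right ((Nat.coprime_primes hq hs).mpr hqs))
  obtain ⟨x, hx1, hx2⟩ := Nat.chineseRemainder c1 a b
  obtain ⟨y, hy1, hy2⟩ := Nat.chineseRemainder c2 x 1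
  have ex : (y : ZMod p) = a := by
    rw [ZMod.natCast_eq_natCast_iff]
    exact (hy1.of_mul_right q).trans hx1
  have ey : (y : ZMod q) = b := by
    rw [ZMod.natCast_eq_natCast_iff]
    exact (hy1.of_mul_left p).trans hx2
  have hcop : Nat.Coprime y (p * q * (4 * s)) := by
    apply Nat.Coprime.mul_right
    · apply Nat.Coprime.mul_right
      · rw [Nat.coprime_comm, hp.coprime_iff_not_dvd, ← ZMod.natCast_eq_zero_iff, ex]
        rintro h0; apply ha; rw [h0]; exact IsSquare.zero
      · rw [Nat.coprime_comm, hq.coprime_iff_not_dvd, ← ZMod.natCast_eq_zero_iff, ey]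
        rintro h0; apply hb; rw [h0]; exact IsSquare.zero
    · have := hy2.gcd_eq
      rw [Nat.gcd_one_left] at this
      exact this
  have hne : NeZero (p * q * (4 * s)) := ⟨by
    have := hp.pos; have := hq.pos; have := hs.pos; positivity⟩
  obtain ⟨l, hln, hl, hly⟩ := Nat.forall_exists_prime_gt_and_eq_mod
    ((ZMod.isUnit_iff_coprime y (p * q * (4 * s))).mpr hcop) (max n 2)
  rw [ZMod.natCast_eq_natCast_iff] at hly
  have fl : Fact l.Prime := ⟨hl⟩
  have lp : (l : ZMod p) = a := by
    rw [← ex, ZMod.natCast_eq_natCast_iff]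
    exact (hly.of_mul_right (4 * s)).of_mul_right q
  have lq : (l : ZMod q) = b := by
    rw [← ey, ZMod.natCast_eq_natCast_iff]
    exact (hly.of_mul_right (4 * s)).of_mul_left p
  have l4s : l ≡ 1 [MOD 4 * s] := (hly.of_mul_left (p * q)).trans hy2
  have ls : (l : ZMod s) = 1 := by
    have := l4s.of_mul_left 4
    rw [← ZMod.natCast_eq_natCast_iff] at this
    simpa using this
  have l4 : l % 4 = 1 := l4s.of_mul_right s
  have hl2 : l ≠ 2 := by omega
  refine ⟨l, by omega, hl, by rwa [lp], ?_, ?_⟩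
  · rw [ZMod.exists_sq_eq_prime_iff_of_mod_four_eq_one l4 hs2, ls]
    exact IsSquare.one
  · have np : ¬ IsSquare (p : ZMod l) := by
      rw [ZMod.exists_sq_eq_prime_iff_of_mod_four_eq_one l4 hp2, lp]; exact ha
    have nq : ¬ IsSquare (q : ZMod l) := by
      rw [ZMod.exists_sq_eq_prime_iff_of_mod_four_eq_one l4 hq2, lq]; exact hb
    have p0 : (p : ZMod l) ≠ 0 := by intro h0; apply np; rw [h0]; exact IsSquare.zero
    have q0 : (q : ZMod l) ≠ 0 := by intro h0; apply nq; rw [h0]; exact IsSquare.zero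
    have hpq0 : (((p * q : ℕ) : ℤ) : ZMod l) ≠ 0 := by push_cast; exact mul_ne_zero p0 q0
    have h1 : legendreSym l p = -1 := (legendreSym.eq_neg_one_iff l).mpr (by simpa using np)
    have h2 : legendreSym l q = -1 := (legendreSym.eq_neg_one_iff l).mpr (by simpa using nq)
    have h3 : legendreSym l ((p * q : ℕ) : ℤ) = 1 := by
      push_cast
      rw [legendreSym.mul, h1, h2]; norm_num
    have := (legendreSym.eq_one_iff l hpq0).mp h3
    simpa using this


theorem mem_sylow {G : Type*} [CommGroup G] (Q : Sylow 2 G) (x : G) :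
    x ∈ (Q : Subgroup G) ↔ ∃ n : ℕ, x ^ (2 ^ n) = 1 := by
  constructor
  · intro hx
    obtain ⟨n, hn⟩ := Q.isPGroup' ⟨x, hx⟩
    exact ⟨n, by simpa using congrArg Subtype.val hn⟩
  · rintro ⟨n, hn⟩
    have h1 : IsPGroup 2 (Subgroup.zpowers x) := by
      rintro ⟨y, hy⟩
      obtain ⟨k, rfl⟩ := Subgroup.mem_zpowers_iff.mp hy
      refine ⟨n, ?_⟩
      ext
      simp only [Subgroup.coe_pow, Subgroup.coe_one]
      rw [← zpow_natCast, ← zpow_mul, mul_comm, zpow_mul, zpow_natCast, hn, one_zpow]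
    have h2 := IsPGroup.to_sup_of_normal_right h1 Q.isPGroup'
    have h3 := Q.is_maximal' h2 le_sup_right
    have h4 : x ∈ Subgroup.zpowers x ⊔ (Q : Subgroup G) :=
      (le_sup_left : Subgroup.zpowers x ≤ _) (Subgroup.mem_zpowers x)
    rw [h3] at h4
    exact h4

theorem gen_of_nonsquare {Q : Type*} [CommGroup Q] [Finite Q] (hQ : IsPGroup 2 Q)
    (h3 : ∀ y z : Q, y ^ 2 = 1 → z ^ 2 = 1 → y = 1 ∨ z = 1 ∨ y = z)
    (c : Q) (hc : ∀ y : Q, c ≠ y ^ 2) (x : Q) : ∃ e : ℕ, x = c ^ e := by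
  let f : Q →* Q := powMonoidHom 2
  have hf : ∀ y, f y = y ^ 2 := fun y => rfl
  have hker : Nat.card f.ker ≤ 2 := by
    have : ∃ t : Q, (f.ker : Set Q) ⊆ {1, t} := by
      by_cases h : ∃ t ∈ f.ker, t ≠ 1
      · obtain ⟨t, ht, ht1⟩ := h
        refine ⟨t, fun y hy => ?_⟩
        rcases h3 y t hy ht with h | h | h
        · exact Or.inl h
        · exact absurd h ht1
        · exact Or.inr h
      · push Not at h
        exact ⟨1, fun y hy => Or.inl (h y hy)⟩
    obtain ⟨t, ht⟩ := this
    calc Nat.card f.ker = (f.ker : Set Q).ncard := rfl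
      _ ≤ ({1, t} : Set Q).ncard := Set.ncard_le_ncard ht (Set.toFinite _)
      _ ≤ 2 := by
        refine (Set.ncard_insert_le 1 {t}).trans ?_
        rw [Set.ncard_singleton]
  have hcr : c ∉ f.range := by
    rintro ⟨y, hy⟩
    exact hc y hy.symm
  have hidx : f.range.index = Nat.card f.ker := by
    have h1 := f.range.card_mul_index
    have h2 := f.ker.card_mul_index
    rw [Subgroup.index_ker] at h2
    have h4 : Nat.card f.range * f.range.index = Nat.card f.range * Nat.card f.ker := by
      rw [h1, ← h2, mul_comm]
    exact Nat.eq_of_mul_eq_mul_left Nat.card_pos h4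
  have hidx2 : f.range.index = 2 := by
    have h1 : f.range.index ≠ 1 := by
      intro h1
      rw [Subgroup.index_eq_one] at h1
      exact hcr (h1 ▸ Subgroup.mem_top c)
    have h2 : f.range.index ≠ 0 := Subgroup.index_ne_zero_of_finite
    omega
  have step : ∀ x : Q, ∃ (e : ℕ) (y : Q), x = c ^ e * y ^ 2 := by
    intro x
    by_cases hx : x ∈ f.range
    · obtain ⟨y, rfl⟩ := hx
      exact ⟨0, y, by rw [hf, pow_zero, one_mul]⟩
    · have : x * c ∈ f.range := by
        rw [Subgroup.mul_mem_iff_of_index_two hidx2]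
        exact iff_of_false hx hcr
      obtain ⟨y, hy⟩ := this
      rw [hf] at hy
      refine ⟨1, y * c⁻¹, ?_⟩
      rw [mul_pow, hy, pow_one, inv_pow, pow_two, mul_inv, ← mul_assoc, ← mul_assoc, mul_comm c (x * c),
        mul_inv_cancel_right, mul_inv_cancel_right]
  have it : ∀ (n : ℕ) (x : Q), ∃ (e : ℕ) (y : Q), x = c ^ e * y ^ (2 ^ n) := by
    intro n
    induction n with
    | zero => intro x; exact ⟨0, x, by simp⟩
    | succ n ih =>
      intro x
      obtain ⟨e, y, rfl⟩ := ih x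
      obtain ⟨e', z, rfl⟩ := step y
      refine ⟨e + e' * 2 ^ n, z, ?_⟩
      rw [mul_pow, ← pow_mul, ← pow_mul, pow_add, mul_assoc, pow_succ', mul_comm (2 : ℕ) (2 ^ n)]
  obtain ⟨n, hn⟩ := IsPGroup.iff_card.mp hQ
  obtain ⟨e, y, rfl⟩ := it n x
  exact ⟨e, by rw [← hn, pow_card_eq_one', mul_one]⟩

theorem group_final {G C : Type*} [CommGroup G] [Finite G] [CommGroup C] [Finite C]
    (N : G →* C) (j : C →* G) (hNj : ∀ y, N (j y) = y ^ 2)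
    (H1 : ∀ a b : G, (∃ n : ℕ, a ^ (2 ^ n) = 1) → (∃ n : ℕ, b ^ (2 ^ n) = 1) → a ∉ j.range →
      b ∉ j.range → a * b ∈ j.range)
    (H2 : ∀ y : C, y ^ 2 = 1 → j y = 1)
    (H3 : ∀ y z : C, y ^ 2 = 1 → z ^ 2 = 1 → y = 1 ∨ z = 1 ∨ y = z)
    (H4 : ∃ a : G, ∀ y, N a ≠ y ^ 2) (P : Sylow 2 G) (Q : Sylow 2 C) :
    IsCyclic (P : Subgroup G) ∧ Nat.card (P : Subgroup G) = Nat.card (Q : Subgroup C) := by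
  obtain ⟨a0, ha0, hc0⟩ : ∃ a0 ∈ (P : Subgroup G), ∀ y, N a0 ≠ y ^ 2 := by
    obtain ⟨a, ha⟩ := H4
    obtain ⟨k, m, hm, hcard⟩ := Nat.exists_eq_two_pow_mul_odd (n := Nat.card G) Nat.card_pos.ne'
    refine ⟨a ^ m, (mem_sylow P _).mpr ⟨k, by rw [← pow_mul, mul_comm, ← hcard, pow_card_eq_one']⟩, ?_⟩
    intro y hy
    obtain ⟨t, rfl⟩ := hm
    apply ha (y * (N a ^ t)⁻¹)
    rw [map_pow, pow_succ, pow_mul'] at hy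
    rw [mul_pow, ← hy]
    rw [inv_pow, mul_right_comm, mul_inv_cancel, one_mul]
  have hNQ : ∀ a ∈ (P : Subgroup G), N a ∈ (Q : Subgroup C) := by
    intro a ha
    obtain ⟨n, hn⟩ := (mem_sylow P a).mp ha
    exact (mem_sylow Q _).mpr ⟨n, by rw [← map_pow, hn, map_one]⟩
  have ha0j : a0 ∉ j.range := by
    rintro ⟨y, rfl⟩
    exact hc0 y (hNj y)
  have hker : ∀ a ∈ (P : Subgroup G), N a = 1 → a = 1 := by
    intro a ha h1
    have haj : a ∈ j.range := by
      by_contra haj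
      obtain ⟨y, hy⟩ := H1 a a0 ((mem_sylow P a).mp ha) ((mem_sylow P a0).mp ha0) haj ha0j
      apply hc0 y
      rw [← hNj, hy, map_mul, h1, one_mul]
    obtain ⟨y, rfl⟩ := haj
    rw [hNj] at h1
    exact H2 y h1
  let f : (P : Subgroup G) →* (Q : Subgroup C) :=
    (N.comp (P : Subgroup G).subtype).codRestrict _ (fun a => hNQ a a.2)
  have hfi : Function.Injective f := by
    rw [injective_iff_map_eq_one]
    rintro ⟨a, ha⟩ h
    have := hker a ha (congrArg Subtype.val h)
    exact Subtype.ext this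
  have hgen := gen_of_nonsquare (Q := (Q : Subgroup C)) Q.isPGroup'
    (by
      intro y z hy hz
      have := H3 y z (by exact_mod_cast congrArg Subtype.val hy) (by exact_mod_cast congrArg Subtype.val hz)
      rcases this with h | h | h
      · left; exact Subtype.ext h
      · right; left; exact Subtype.ext h
      · right; right; exact Subtype.ext h)
    (f ⟨a0, ha0⟩) (by
      intro y hy
      have := congrArg Subtype.val hy
      exact hc0 (y : C) this)
  have hfs : Function.Surjective f := by
    intro x
    obtain ⟨e, rfl⟩ := hgen x
    exact ⟨⟨a0, ha0⟩ ^ e, map_pow f _ _⟩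
  have hcyc : IsCyclic (Q : Subgroup C) := by
    refine ⟨⟨f ⟨a0, ha0⟩, fun x => ?_⟩⟩
    obtain ⟨e, rfl⟩ := hgen x
    exact ⟨e, by simp⟩
  refine ⟨isCyclic_of_injective f hfi, Nat.card_eq_of_bijective f ⟨hfi, hfs⟩⟩


theorem nsq_int (l m : ℕ) (hl : l.Prime) (hm : ¬ l ∣ m) : ¬ IsSquare ((l : ℤ) * m) := by
  rintro ⟨n, hn⟩
  apply QF.not_sq_dvd l m hl hm
  have hlp : Prime (l : ℤ) := Nat.prime_iff_prime_int.mp hl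
  have h1 : (l : ℤ) ∣ n := by
    have : (l : ℤ) ∣ n * n := ⟨m, hn.symm⟩
    exact (hlp.dvd_or_dvd this).elim id id
  rw [hn, pow_two]
  exact mul_dvd_mul h1 h1

section quad
variable {K : Type*} [Field K] [NumberField K] {d : ℤ} {θ : 𝓞 K} {τ : 𝓞 K ≃+* 𝓞 K}

theorem QF.dec (h : QF K d θ τ) (z : 𝓞 K) : ∃ a b : ℤ, ((2 * d : ℤ) : 𝓞 K) * z = a + b * θ := by
  obtain ⟨t, ht⟩ := h.trace z
  obtain ⟨m, hm⟩ := h.diff z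
  refine ⟨d * t, m, ?_⟩
  push_cast
  rw [← ht, ← hm, ← h.sq]; ring

theorem QF.sq_int (h : QF K d θ τ) (x : 𝓞 K) (m : ℤ) (hx : x ^ 2 = m) : IsSquare m ∨ IsSquare (d * m) := by
  have h1 : (τ x) ^ 2 = x ^ 2 := by rw [← map_pow, hx, map_intCast]
  rcases sq_eq_sq_iff_eq_or_eq_neg.mp h1 with h2 | h2
  · obtain ⟨n, rfl⟩ := h.fix x h2
    left
    exact ⟨n, by rw [← pow_two]; exact_mod_cast hx.symm⟩
  · obtain ⟨n, hn⟩ := h.fix (θ * x) (by rw [map_mul, h.conjθ, h2]; ring)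
    right
    refine ⟨n, ?_⟩
    have : ((d * m : ℤ) : 𝓞 K) = ((n * n : ℤ) : 𝓞 K) := by
      push_cast
      rw [← hn, ← hx, ← h.sq]; ring
    exact_mod_cast this

variable {L : Type*} [Field L] [NumberField L] [Algebra K L] {σ : 𝓞 L ≃ₐ[𝓞 K] 𝓞 L}

theorem QE.conj_root (h : QE K L σ) (hK : QF K d θ τ) (χ : 𝓞 L) (m : ℤ) (hχ : χ ^ 2 = m)
    (h1 : ¬ IsSquare m) (h2 : ¬ IsSquare (d * m)) : σ χ = -χ := by
  have h3 : (σ χ) ^ 2 = χ ^ 2 := by rw [← map_pow, hχ, map_intCast]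
  rcases sq_eq_sq_iff_eq_or_eq_neg.mp h3 with h4 | h4
  · obtain ⟨x, rfl⟩ := h.fix χ h4
    have : x ^ 2 = m := by
      apply FaithfulSMul.algebraMap_injective (𝓞 K) (𝓞 L)
      rw [map_pow, hχ, map_intCast]
    rcases hK.sq_int x m this with h5 | h5
    · exact absurd h5 h1
    · exact absurd h5 h2
  · exact h4

theorem QE.decL (h : QE K L σ) (hK : QF K d θ τ) (φ ψ : 𝓞 L) (s : ℤ) (hφ : φ ^ 2 = s)
    (hσφ : σ φ = -φ) (hθ : algebraMap (𝓞 K) (𝓞 L) θ = φ * ψ) (ω : 𝓞 L) :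
    ∃ a b c e : ℤ, ((4 * s * d : ℤ) : 𝓞 L) * ω = a + b * φ + c * ψ + e * (φ * ψ) := by
  obtain ⟨A, hA⟩ := h.fix (ω + σ ω) (by rw [map_add, h.invol]; ring)
  obtain ⟨B, hB⟩ := h.fix (φ * (ω - σ ω)) (by rw [map_mul, map_sub, h.invol, hσφ]; ring)
  obtain ⟨a, b, ha⟩ := hK.dec A
  obtain ⟨c, e, hc⟩ := hK.dec B
  have ha' := congrArg (algebraMap (𝓞 K) (𝓞 L)) ha
  have hc' := congrArg (algebraMap (𝓞 K) (𝓞 L)) hc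
  rw [map_mul, map_add, map_mul, map_intCast, map_intCast, map_intCast, hθ, ← hA] at ha'
  rw [map_mul, map_add, map_mul, map_intCast, map_intCast, map_intCast, hθ, ← hB] at hc'
  refine ⟨s * a, c, s * e, s * b, ?_⟩
  push_cast at ha' hc' ⊢
  linear_combination s * ha' + φ * hc' + (-2 * d * (ω - σ ω) + e * ψ) * hφ

end quad

/-- `r` is, up to rational squares, a square times a unit of relative norm one. -/
def WW {K L : Type*} [Field K] [NumberField K] [Field L] [NumberField L] [Algebra K L]
    (σ : 𝓞 L ≃ₐ[𝓞 K] 𝓞 L) (r : ℤ) : Prop :=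
  ∃ (z : 𝓞 L) (c : ℤ) (u : (𝓞 L)ˣ), c ≠ 0 ∧ (u : 𝓞 L) * σ u = 1 ∧ z ^ 2 = u * r * c ^ 2

section WW
variable {K L : Type*} [Field K] [NumberField K] [Field L] [NumberField L] [Algebra K L]
  {σ : 𝓞 L ≃ₐ[𝓞 K] 𝓞 L}

theorem WW.mul {a b : ℤ} (ha : WW σ a) (hb : WW σ b) : WW σ (a * b) := by
  obtain ⟨z, c, u, hc, hu, e⟩ := ha
  obtain ⟨z', c', u', hc', hu', e'⟩ := hb
  refine ⟨z * z', c * c', u * u', mul_ne_zero hc hc', ?_, ?_⟩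
  · push_cast
    rw [map_mul]
    linear_combination (u' : 𝓞 L) * σ u' * hu + hu'
  · push_cast
    rw [mul_pow, e, e']; ring

theorem WW.cancel {a m : ℤ} (hm : m ≠ 0) (ha : WW σ (a * m ^ 2)) : WW σ a := by
  obtain ⟨z, c, u, hc, hu, e⟩ := ha
  refine ⟨z, m * c, u, mul_ne_zero hm hc, hu, ?_⟩
  rw [e]; push_cast; ring

theorem WW.of_sq (z : 𝓞 L) (r : ℤ) (h : z ^ 2 = r) : WW σ r :=
  ⟨z, 1, 1, one_ne_zero, by simp, by simp [h]⟩

theorem WW.one : WW σ 1 := WW.of_sq 1 1 (by simp)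

theorem WW.toTT {r : ℤ} (h : WW σ r) : TT (𝓞 L) r := by
  obtain ⟨z, c, u, hc, -, e⟩ := h
  refine ⟨z, c, hc, ?_⟩
  rw [e, mul_assoc]
  push_cast
  exact associated_unit_mul_left _ _ u.isUnit

theorem WW.eta (h : QE K L σ) {r : ℤ} (hW : WW σ r) (hr : r ≠ 0) (ε : (𝓞 K)ˣ) (δ : 𝓞 K)
    (e : δ ^ 2 = ε * (r : 𝓞 K)) : ∃ η : (𝓞 L)ˣ, (η : 𝓞 L) * σ η = algebraMap (𝓞 K) (𝓞 L) ε ∨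
      (η : 𝓞 L) * σ η = - algebraMap (𝓞 K) (𝓞 L) ε := by
  obtain ⟨z, c, u, hc, hu, e2⟩ := hW
  have e' := congrArg (algebraMap (𝓞 K) (𝓞 L)) e
  rw [map_pow, map_mul, map_intCast] at e'
  have hrc : ((r : 𝓞 L) * (c : 𝓞 L)) ≠ 0 := by exact_mod_cast mul_ne_zero hr hc
  have e3 : (algebraMap (𝓞 K) (𝓞 L) δ * z) ^ 2 =
      ((r : 𝓞 L) * (c : 𝓞 L)) ^ 2 * (algebraMap (𝓞 K) (𝓞 L) ε * u) := by
    rw [mul_pow, e', e2]; ring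
  obtain ⟨η, hη⟩ := sq_dvd_of ((r : 𝓞 L) * (c : 𝓞 L)) _ ⟨_, e3⟩
  have e4 : η ^ 2 = algebraMap (𝓞 K) (𝓞 L) ε * u := by
    rw [hη, mul_pow] at e3
    exact mul_left_cancel₀ (pow_ne_zero 2 hrc) e3
  have hunit : IsUnit η := by
    have : IsUnit (η ^ 2) := by
      rw [e4]; exact (ε.isUnit.map _).mul u.isUnit
    exact (isUnit_pow_iff two_ne_zero).mp this
  refine ⟨hunit.unit, ?_⟩
  rw [IsUnit.unit_spec]
  apply sq_eq_sq_iff_eq_or_eq_neg.mp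
  rw [mul_pow, ← map_pow, e4, map_mul, AlgEquiv.commutes]
  linear_combination (algebraMap (𝓞 K) (𝓞 L) ε) ^ 2 * hu

theorem WW.all_units (h : QE K L σ) (ε : (𝓞 K)ˣ) (hε : ∃ η : (𝓞 L)ˣ,
      (η : 𝓞 L) * σ η = algebraMap (𝓞 K) (𝓞 L) ε ∨ (η : 𝓞 L) * σ η = - algebraMap (𝓞 K) (𝓞 L) ε)
    (hall : ∀ u : (𝓞 K)ˣ, ∃ v, u = v ^ 2 ∨ u = - v ^ 2 ∨ u = ε * v ^ 2 ∨ u = - (ε * v ^ 2))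
    (u : (𝓞 K)ˣ) : ∃ w : (𝓞 L)ˣ, (w : 𝓞 L) * σ w = algebraMap (𝓞 K) (𝓞 L) u ∨
      (w : 𝓞 L) * σ w = - algebraMap (𝓞 K) (𝓞 L) u := by
  obtain ⟨η, hη⟩ := hε
  obtain ⟨v, hv⟩ := hall u
  let V : (𝓞 L)ˣ := Units.map (algebraMap (𝓞 K) (𝓞 L)).toMonoidHom v
  have hV : (V : 𝓞 L) = algebraMap (𝓞 K) (𝓞 L) v := rfl
  have hσV : σ (V : 𝓞 L) = V := by rw [hV, AlgEquiv.commutes]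
  have c1 : algebraMap (𝓞 K) (𝓞 L) ((v ^ 2 : (𝓞 K)ˣ) : 𝓞 K) = (V : 𝓞 L) ^ 2 := by
    rw [Units.val_pow_eq_pow_val, map_pow, hV]
  rcases hv with rfl | rfl | rfl | rfl
  · refine ⟨V, Or.inl ?_⟩
    rw [hσV, c1]; ring
  · refine ⟨V, Or.inr ?_⟩
    rw [hσV, Units.val_neg, map_neg, c1]; ring
  · refine ⟨η * V, ?_⟩
    rw [Units.val_mul, Units.val_mul, map_mul, hσV, map_mul, c1]
    rcases hη with hη | hη
    · left; linear_combination (V : 𝓞 L) ^ 2 * hη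
    · right; linear_combination (V : 𝓞 L) ^ 2 * hη
  · refine ⟨η * V, ?_⟩
    rw [Units.val_mul, Units.val_neg, Units.val_mul, map_mul, hσV, map_neg, map_mul, c1]
    rcases hη with hη | hη
    · right; linear_combination (V : 𝓞 L) ^ 2 * hη
    · left; linear_combination (V : 𝓞 L) ^ 2 * hη

end WW


theorem pow_two_aux2 {G : Type*} [Group G] (h : ∀ y : G, y ^ 4 = 1 → y ^ 2 = 1) (y : G) (n : ℕ)
    (hy : y ^ (2 ^ n) = 1) : y ^ 2 = 1 := by
  induction n with
  | zero => rw [pow_zero, pow_one] at hy; rw [hy, one_pow]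
  | succ n ih =>
    cases n with
    | zero => simpa using hy
    | succ m =>
      apply ih
      have := h (y ^ (2 ^ m)) (by rw [← pow_mul, ← hy]; congr 1; ring)
      rw [← pow_mul] at this
      rw [pow_succ]; exact this

theorem pow_two_aux1 {G : Type*} [Group G] (h : ∀ y : G, y ^ 2 = 1 → y = 1) (y : G) (n : ℕ)
    (hy : y ^ (2 ^ n) = 1) : y = 1 := by
  induction n with
  | zero => rwa [pow_zero, pow_one] at hy
  | succ n ih =>
    apply ih
    apply h
    rw [← pow_mul, ← pow_succ]; exact hy

theorem j_one {K L : Type*} [Field K] [NumberField K] [Field L] [NumberField L] [Algebra K L]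
    (j : ClassGroup (𝓞 K) →* ClassGroup (𝓞 L))
    (hj : ∀ I, I ≠ 0 → j (cl I) = cl (I.map (algebraMap (𝓞 K) (𝓞 L))))
    (J : Ideal (𝓞 K)) (hJ : J ≠ 0) (r : ℤ) (hJr : J ^ 2 = Ideal.span {(r : 𝓞 K)})
    (hT : TT (𝓞 L) r) : j (cl J) = 1 := by
  rw [hj J hJ]
  refine hT.cl_eq_one _ (QE.up_ne J hJ) ?_
  rw [← Ideal.map_pow, hJr, Ideal.map_span, Set.image_singleton, map_intCast]

theorem QE.comm_quad {K L F : Type*} [Field K] [NumberField K] [Field L] [NumberField L]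
    [Algebra K L] [Field F] [NumberField F] [Algebra F L] {σ : 𝓞 L ≃ₐ[𝓞 K] 𝓞 L}
    {d : ℤ} {ψ : 𝓞 F} {τ : 𝓞 F ≃+* 𝓞 F} (hF : QF F d ψ τ) (hd : d ≠ 0)
    (hσ : σ (algebraMap (𝓞 F) (𝓞 L) ψ) = - algebraMap (𝓞 F) (𝓞 L) ψ) (z : 𝓞 F) :
    σ (algebraMap (𝓞 F) (𝓞 L) z) = algebraMap (𝓞 F) (𝓞 L) (τ z) := by
  obtain ⟨a, b, e⟩ := hF.dec z
  have e1 := congrArg (fun x => σ (algebraMap (𝓞 F) (𝓞 L) x)) e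
  have e2 := congrArg (fun x => algebraMap (𝓞 F) (𝓞 L) (τ x)) e
  simp only [map_mul, map_add, map_intCast, hσ, hF.conjθ, map_neg] at e1 e2
  have h0 : ((2 * d : ℤ) : 𝓞 L) ≠ 0 := by exact_mod_cast mul_ne_zero two_ne_zero hd
  apply mul_left_cancel₀ h0
  rw [e1, e2]

theorem main_abs (k F F' L : Type*) [Field k] [NumberField k] [Field F] [NumberField F]
    [Field F'] [NumberField F'] [Field L] [NumberField L] [Algebra k L] [Algebra F L] [Algebra F' L]
    (hk2 : Module.finrank ℚ k = 2) (hF2 : Module.finrank ℚ F = 2) (hF'2 : Module.finrank ℚ F' = 2)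
    (hkL : Module.finrank k L = 2) (hFL : Module.finrank F L = 2) (hF'L : Module.finrank F' L = 2)
    (p q s : ℕ) (hp : p.Prime) (hq : q.Prime) (hs : s.Prime) (hp8 : p % 8 = 5) (hq4 : q % 4 = 3)
    (hs4 : s % 4 = 3) (hqs : q ≠ s) (hqp : IsSquare (q : ZMod p))
    (θ : 𝓞 k) (φ : 𝓞 F) (ψ : 𝓞 F') (hθ : θ * θ = (((p : ℤ) * q * s : ℤ) : 𝓞 k))
    (hφ : φ * φ = ((s : ℤ) : 𝓞 F)) (hψ : ψ * ψ = (((p : ℤ) * q : ℤ) : 𝓞 F'))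
    (hθφψ : algebraMap (𝓞 k) (𝓞 L) θ = algebraMap (𝓞 F) (𝓞 L) φ * algebraMap (𝓞 F') (𝓞 L) ψ)
    (P : Sylow 2 (ClassGroup (𝓞 L))) (Q : Sylow 2 (ClassGroup (𝓞 k))) :
    IsCyclic (P : Subgroup (ClassGroup (𝓞 L))) ∧
      Nat.card (P : Subgroup (ClassGroup (𝓞 L))) = Nat.card (Q : Subgroup (ClassGroup (𝓞 k))) := by
  have hpq : p ≠ q := by rintro rfl; omega
  have hps : p ≠ s := by rintro rfl; omega
  have hp2 : p ≠ 2 := by rintro rfl; omega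
  have hq2 : q ≠ 2 := by rintro rfl; omega
  have hs2 : s ≠ 2 := by rintro rfl; omega
  have ndvd : ∀ a b : ℕ, a.Prime → b.Prime → a ≠ b → ¬ a ∣ b :=
    fun a b ha hb hab h => hab ((Nat.prime_dvd_prime_iff_eq ha hb).mp h)
  have npq := ndvd p q hp hq hpq
  have nps := ndvd p s hp hs hps
  have nqp := ndvd q p hq hp hpq.symm
  have nsp := ndvd s p hs hp hps.symm
  have nsq := ndvd s q hs hq hqs.symm
  have nqs := ndvd q s hq hs hqs
  have hp0 : (p : ℤ) ≠ 0 := by exact_mod_cast hp.ne_zero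
  have hq0 : (q : ℤ) ≠ 0 := by exact_mod_cast hq.ne_zero
  have hs0 : (s : ℤ) ≠ 0 := by exact_mod_cast hs.ne_zero
  -- nonsquares
  have sq1 : ¬ IsSquare (s : ℤ) := by
    have := nsq_int s 1 hs (by rw [Nat.dvd_one]; exact hs.one_lt.ne')
    simpa using this
  have sq2 : ¬ IsSquare ((p : ℤ) * q) := nsq_int p q hp npq
  have sq3 : ¬ IsSquare ((p : ℤ) * q * s) := by
    have := nsq_int p (q * s) hp (by rw [hp.dvd_mul]; tauto)
    push_cast at this; rwa [mul_assoc]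
  have sq4 : ¬ IsSquare ((p : ℤ) * q * s * s) := by
    have := nsq_int p (q * s * s) hp (by rw [hp.dvd_mul, hp.dvd_mul]; tauto)
    push_cast at this; convert this using 2; ring
  have sq5 : ¬ IsSquare ((p : ℤ) * q * s * (p * q)) := by
    have := nsq_int s (p * q * p * q) hs (by rw [hs.dvd_mul, hs.dvd_mul, hs.dvd_mul]; tauto)
    push_cast at this; convert this using 2; ring
  have sq6 : ¬ IsSquare ((s : ℤ) * (p * q)) := by
    have := nsq_int s (p * q) hs (by rw [hs.dvd_mul]; tauto)
    push_cast at this; exact this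
  have sq7 : ¬ IsSquare ((p : ℤ) * q * s) := sq3
  obtain ⟨τk, hk⟩ := exists_QF k _ θ hk2 hθ sq3
  obtain ⟨τF, hF⟩ := exists_QF F _ φ hF2 hφ sq1
  obtain ⟨τF', hF'⟩ := exists_QF F' _ ψ hF'2 hψ sq2
  obtain ⟨σ, hσ⟩ := exists_QE k L hkL
  obtain ⟨σF, hσF⟩ := exists_QE F L hFL
  obtain ⟨σF', hσF'⟩ := exists_QE F' L hF'L
  set Φ := algebraMap (𝓞 F) (𝓞 L) φ with hΦ
  set Ψ := algebraMap (𝓞 F') (𝓞 L) ψ with hΨ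
  have Φ2 : Φ ^ 2 = ((s : ℤ) : 𝓞 L) := by rw [hΦ, ← map_pow, pow_two, hφ, map_intCast]
  have Ψ2 : Ψ ^ 2 = (((p : ℤ) * q : ℤ) : 𝓞 L) := by rw [hΨ, ← map_pow, pow_two, hψ, map_intCast]
  have σΦ : σ Φ = -Φ := hσ.conj_root hk Φ _ Φ2 sq1 sq4
  have σΨ : σ Ψ = -Ψ := hσ.conj_root hk Ψ _ Ψ2 sq2 sq5
  have σFΨ : σF Ψ = -Ψ := hσF.conj_root hF Ψ _ Ψ2 sq2 sq6
  have σF'Φ : σF' Φ = -Φ := hσF'.conj_root hF' Φ _ Φ2 sq1 sq3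
  have σFΦ : σF Φ = Φ := by rw [hΦ, AlgEquiv.commutes]
  have σF'Ψ : σF' Ψ = Ψ := by rw [hΨ, AlgEquiv.commutes]
  have hdec := hσ.decL hk Φ Ψ _ Φ2 σΦ hθφψ
  have hD0 : (4 * (s : ℤ) * ((p : ℤ) * q * s)) ≠ 0 := by positivity
  have hcomp : ∀ ω : 𝓞 L, σF (σF' ω) = σ ω := by
    intro ω
    obtain ⟨a, b, c, e, E⟩ := hdec ω
    have e1 := congrArg (fun x => σF (σF' x)) E
    have e2 := congrArg (fun x => σ x) E
    simp only [map_mul, map_add, map_intCast, σΦ, σΨ, σFΨ, σF'Φ, σFΦ, σF'Ψ, map_neg] at e1 e2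
    have h0 : ((4 * (s : ℤ) * ((p : ℤ) * q * s) : ℤ) : 𝓞 L) ≠ 0 := by exact_mod_cast hD0
    apply mul_left_cancel₀ h0
    rw [e1, e2]
  obtain ⟨N, j, S, hN, hj, hS, hjN, hNj⟩ := hσ.homs
  obtain ⟨NF, jF, SF, hNF, hjF, hSF, hjNF, hNjF⟩ := hσF.homs
  obtain ⟨NF', jF', SF', hNF', hjF', hSF', hjNF', hNjF'⟩ := hσF'.homs
  have hScomp : ∀ a, S a = SF (SF' a) := by
    intro a
    obtain ⟨I, hI, rfl⟩ := cl_surj a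
    rw [hS I hI, hSF' I hI, hSF _ (QE.conj_ne I hI), Ideal.map_map]
    congr 2
    ext1 ω
    exact (hcomp ω).symm
  obtain ⟨cF1, cF2⟩ := hF.caseF s hs hs4
  obtain ⟨c1, c2, c3, c4⟩ := hF'.caseF' p q hp hq hp8 hq4 hqp
  obtain ⟨⟨ε, r, δ, kδ, kr, kall⟩, k2, k3⟩ := hk.casek p q s hp hq hs (by omega) hq4 hs4 hqs
  have TT2 : TT (𝓞 L) 2 := cF1.map (algebraMap (𝓞 F) (𝓞 L))
  -- the `WW` facts
  have Ws : WW σ (s : ℤ) := WW.of_sq Φ _ Φ2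
  have Wpq : WW σ ((p : ℤ) * q) := WW.of_sq Ψ _ Ψ2
  have hun : ∀ (e : (𝓞 F')ˣ) (d : 𝓞 F') (m : ℕ), d ^ 2 = e * (m : 𝓞 F') → WW σ (m : ℤ) := by
    intro e d m h
    refine ⟨algebraMap _ _ d, 1, Units.map (algebraMap (𝓞 F') (𝓞 L)).toMonoidHom e, one_ne_zero, ?_, ?_⟩
    · show algebraMap (𝓞 F') (𝓞 L) e * σ (algebraMap (𝓞 F') (𝓞 L) e) = 1
      rw [QE.comm_quad hF' (mul_ne_zero hp0 hq0) σΨ, ← map_mul, c1 e, map_one]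
    · show _ = algebraMap (𝓞 F') (𝓞 L) e * _ * _
      rw [← map_pow, h, map_mul, map_natCast]; simp
  have Wp_q : WW σ (p : ℤ) ∧ WW σ (q : ℤ) := by
    obtain ⟨e, d, h | h⟩ := c2
    · have h1 := hun e d p h
      refine ⟨h1, WW.cancel hp0 (a := q) ?_⟩
      have := Wpq.mul h1
      convert this using 1; ring
    · have h1 := hun e d q h
      refine ⟨WW.cancel hq0 (a := p) ?_, h1⟩
      have := Wpq.mul h1
      convert this using 1; ring
  obtain ⟨Wp, Wq⟩ := Wp_q
  have Wall : ∀ r : ℕ, r ∣ p * q * s → WW σ (r : ℤ) :=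
    three_dvd (fun r => WW σ (r : ℤ)) (by simpa using WW.one)
      (fun a b ha hb => by simpa using ha.mul hb) p q s hp hq hs Wp Wq Ws
  have Tall : ∀ r : ℕ, r ∣ 2 * p * q → TT (𝓞 L) (r : ℤ) :=
    three_dvd (fun r => TT (𝓞 L) (r : ℤ)) (by simpa using TT.one)
      (fun a b ha hb => by simpa using ha.mul hb) 2 p q Nat.prime_two hp hq (by simpa using TT2)
        Wp.toTT Wq.toTT
  have hη : ∀ u : (𝓞 k)ˣ, ∃ w : (𝓞 L)ˣ, (w : 𝓞 L) * σ w = algebraMap (𝓞 k) (𝓞 L) u ∨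
      (w : 𝓞 L) * σ w = - algebraMap (𝓞 k) (𝓞 L) u := by
    have hr0 : (r : ℤ) ≠ 0 := by
      rintro h0
      have : r = 0 := by exact_mod_cast h0
      rw [this, zero_dvd_iff] at kr
      have := Nat.mul_ne_zero (Nat.mul_ne_zero hp.ne_zero hq.ne_zero) hs.ne_zero
      exact this kr
    exact WW.all_units hσ ε (WW.eta hσ (Wall r kr) hr0 ε δ kδ) kall
  have hSa : ∀ a : ClassGroup (𝓞 L), (∃ n : ℕ, a ^ (2 ^ n) = 1) → S a = a := by
    rintro a ⟨n, hn⟩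
    have e1 : a * SF a = 1 := by
      rw [← hjNF, pow_two_aux1 cF2 (NF a) n (by rw [← map_pow, hn, map_one]), map_one]
    have e2 : a * SF' a = 1 := by
      rw [← hjNF']
      obtain ⟨J, r, hJ, hJ1, hJ2, hr⟩ := c3 _ (pow_two_aux2 c4 (NF' a) n (by rw [← map_pow, hn, map_one]))
      rw [← hJ1]
      exact j_one jF' hjF' J hJ r hJ2 (Tall r hr)
    rw [hScomp, eq_inv_of_mul_eq_one_right e2, map_inv, eq_inv_of_mul_eq_one_right e1, inv_inv]
  obtain ⟨δ2, hδ2⟩ := TT2.root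
  have hd4 : ((p : ℤ) * q * s) % 4 = 1 := by
    have h1 : (p : ℤ) % 4 = 1 := by omega
    have h2 : (q : ℤ) % 4 = 3 := by omega
    have h3 : (s : ℤ) % 4 = 3 := by omega
    rw [Int.mul_emod, Int.mul_emod p, h1, h2, h3]; norm_num
  have hΦ0 : Φ ≠ 0 := by
    intro h0
    rw [h0] at Φ2
    have : ((s : ℤ) : 𝓞 L) = 0 := by rw [← Φ2]; simp
    exact hs0 (by exact_mod_cast this)
  have hcop : IsCoprime (s : ℤ) ((p : ℤ) * q) := by
    have : Nat.Coprime s (p * q) := by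
      rw [Nat.Prime.coprime_iff_not_dvd hs, hs.dvd_mul]; tauto
    have := Nat.isCoprime_iff_coprime.mpr this
    push_cast at this; exact this
  refine group_final N j hNj ?_ ?_ k3 ?_ P Q
  · intro a b ha hb haj hbj
    exact hσ.amb_final hk2 Φ hΦ0 σΦ Φ Ψ s (p * q) hcop Φ2 Ψ2 σΦ σΨ δ2 (by simpa using hδ2) hη
      (fun hex x y hx hy => hσ.no_minus hk hd4 sq3 s (by omega) Φ Φ2 σΦ hex x y hx hy)
      j S hj hS a b (hSa a ha) (hSa b hb) haj hbj
  · intro y hy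
    obtain ⟨J, r, hJ, hJ1, hJ2, hr⟩ := k2 y hy
    rw [← hJ1]
    exact j_one j hj J hJ r hJ2 (Wall r hr).toTT
  · obtain ⟨l, hl1, hl2, hl3, hl4, hl5⟩ := exists_dirichlet p q s hp hq hs hpq hps hqs hp2 hq2 hs2
      (4 * s * (p * q * s))
    obtain ⟨I, hI, hIl⟩ := exists_prime_ideal _ s (p * q) Φ Ψ Φ2 Ψ2 hdec l hl2 (by
        intro h
        have h' : l ∣ 4 * s * (p * q * s) := by exact_mod_cast h
        have := Nat.le_of_dvd (by have := hp.pos; have := hq.pos; have := hs.pos; positivity) h'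
        omega) (by simpa using hl4) (by simpa using hl5)
    refine ⟨cl I, fun y hy => hl3 ?_⟩
    rw [hN I hI] at hy
    refine hk.chi (by positivity) p hp (by omega) ⟨q * s, by ring⟩ ?_ _ (QE.relNorm_ne I hI) y hy l 1 one_ne_zero ?_
    · have := QF.not_sq_dvd p (q * s) hp (by rw [hp.dvd_mul]; tauto)
      push_cast at this; rwa [mul_assoc]
    · rw [QE.absNorm_rel, hIl]; simp



theorem sqrtC_sq (d : ℕ) : ((Real.sqrt d : ℝ) : ℂ) ^ 2 = d := by
  rw [← Complex.ofReal_pow, Real.sq_sqrt (Nat.cast_nonneg d)]; simp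

theorem sqrtC_int (R : Type*) [CommRing R] [Algebra R ℂ] (d : ℕ) : IsIntegral R ((Real.sqrt d : ℝ) : ℂ) := by
  refine IsIntegral.of_pow (n := 2) two_pos ?_
  rw [sqrtC_sq]
  have := isIntegral_algebraMap (R := R) (A := ℂ) (x := (d : R))
  rwa [map_natCast] at this

theorem mem_quadF (d : ℕ) : ((Real.sqrt d : ℝ) : ℂ) ∈ quadF d :=
  IntermediateField.subset_adjoin _ _ rfl

theorem mem_biquadF_left (a b : ℕ) : ((Real.sqrt a : ℝ) : ℂ) ∈ biquadF a b :=
  IntermediateField.subset_adjoin _ _ (by simp)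

theorem mem_biquadF_right (a b : ℕ) : ((Real.sqrt b : ℝ) : ℂ) ∈ biquadF a b :=
  IntermediateField.subset_adjoin _ _ (by simp)

theorem fin_quadF (d : ℕ) : FiniteDimensional ℚ (quadF d) :=
  IntermediateField.adjoin.finiteDimensional (sqrtC_int ℚ d)

theorem sup_eq_biquadF (a b : ℕ) : quadF a ⊔ quadF b = biquadF a b := by
  rw [quadF, quadF, biquadF, ← IntermediateField.adjoin_union]; rfl

theorem fin_biquadF (a b : ℕ) : FiniteDimensional ℚ (biquadF a b) := by
  have := fin_quadF a
  have := fin_quadF b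
  rw [← sup_eq_biquadF]
  infer_instance

instance nf_quadF (d : ℕ) : NumberField (quadF d) where
  to_charZero := inferInstance
  to_finiteDimensional := by
    have := fin_quadF d
    convert this

instance nf_biquadF (a b : ℕ) : NumberField (biquadF a b) where
  to_charZero := inferInstance
  to_finiteDimensional := by
    have := fin_biquadF a b
    convert this

theorem sqrtC_mul (a b : ℕ) : ((Real.sqrt (a * b : ℕ) : ℝ) : ℂ) =
    ((Real.sqrt a : ℝ) : ℂ) * ((Real.sqrt b : ℝ) : ℂ) := by
  rw [Nat.cast_mul, Real.sqrt_mul (Nat.cast_nonneg a), Complex.ofReal_mul]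

theorem quadF_le (K : IntermediateField ℚ ℂ) (d : ℕ) (h : ((Real.sqrt d : ℝ) : ℂ) ∈ K) : quadF d ≤ K := by
  rw [quadF, IntermediateField.adjoin_simple_le_iff]; exact h

theorem finrank_quadF (d : ℕ) (hd : ¬ IsSquare (d : ℤ)) : Module.finrank ℚ (quadF d) = 2 := by
  have hi := sqrtC_int ℚ d
  have h1 : Module.finrank ℚ (quadF d) = (minpoly ℚ ((Real.sqrt d : ℝ) : ℂ)).natDegree :=
    IntermediateField.adjoin.finrank hi
  rw [h1]
  apply le_antisymm
  · have hdvd : minpoly ℚ ((Real.sqrt d : ℝ) : ℂ) ∣ (Polynomial.X ^ 2 - Polynomial.C (d : ℚ)) := by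
      apply minpoly.dvd
      simp only [map_sub, map_pow, Polynomial.aeval_X, map_natCast]
      rw [sqrtC_sq, sub_self]
    have := Polynomial.natDegree_le_of_dvd hdvd (Polynomial.X_pow_sub_C_ne_zero two_pos _)
    rwa [Polynomial.natDegree_X_pow_sub_C] at this
  · rw [minpoly.two_le_natDegree_iff hi]
    rintro ⟨x, hx⟩
    apply hd
    have h2 : x ^ 2 = (d : ℚ) := by
      have := congrArg (fun z => z ^ 2) hx
      simp only [sqrtC_sq] at this
      rw [← map_pow] at this
      apply (algebraMap ℚ ℂ).injective
      rw [this, map_natCast]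
    have h3 : IsSquare (((d : ℤ) : ℚ)) := ⟨x, by rw [← pow_two, h2]; simp⟩
    exact Rat.isSquare_intCast_iff.mp h3

/-- The square root of `d` as an algebraic integer. -/
noncomputable def rt (K : IntermediateField ℚ ℂ) (d : ℕ) (h : ((Real.sqrt d : ℝ) : ℂ) ∈ K) : 𝓞 K :=
  ⟨⟨_, h⟩, by
    have := sqrtC_int ℤ d
    rw [mem_integralClosure_iff]
    exact (isIntegral_algebraMap_iff (algebraMap K ℂ).injective (x := (⟨_, h⟩ : K))).mp this⟩

theorem rt_coe (K : IntermediateField ℚ ℂ) (d : ℕ) (h : ((Real.sqrt d : ℝ) : ℂ) ∈ K) :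
    (((rt K d h : 𝓞 K) : K) : ℂ) = ((Real.sqrt d : ℝ) : ℂ) := rfl

theorem coe2_inj (K : IntermediateField ℚ ℂ) {x y : 𝓞 K} (h : ((x : K) : ℂ) = ((y : K) : ℂ)) : x = y :=
  RingOfIntegers.coe_injective (Subtype.coe_injective h)

theorem rt_sq (K : IntermediateField ℚ ℂ) (d : ℕ) (h : ((Real.sqrt d : ℝ) : ℂ) ∈ K) :
    rt K d h * rt K d h = ((d : ℤ) : 𝓞 K) := by
  apply coe2_inj
  have := sqrtC_sq d
  simp only [map_mul, MulMemClass.coe_mul, rt_coe]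
  rw [← pow_two, this]
  simp

theorem finrank_biquadF (a b : ℕ) (ha : ¬ IsSquare (a : ℤ)) (hb : ¬ IsSquare (b : ℤ))
    (hab : ¬ IsSquare ((a : ℤ) * b)) : Module.finrank ℚ (biquadF a b) = 4 := by
  have fa := fin_quadF a
  have fb := fin_quadF b
  have fab := fin_biquadF a b
  have h1 : Module.finrank ℚ (biquadF a b) ≤ 4 := by
    have := IntermediateField.finrank_sup_le (quadF a) (quadF b)
    rwa [sup_eq_biquadF, finrank_quadF a ha, finrank_quadF b hb] at this
  have hle : quadF a ≤ biquadF a b := quadF_le _ _ (mem_biquadF_left a b)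
  have h2 : 2 ∣ Module.finrank ℚ (biquadF a b) := by
    rw [← finrank_quadF a ha]
    exact IntermediateField.finrank_dvd_of_le_right hle
  have h3 : Module.finrank ℚ (biquadF a b) ≠ 2 := by
    intro h
    have e := IntermediateField.eq_of_le_of_finrank_eq hle (by rw [h, finrank_quadF a ha])
    have hm := mem_biquadF_right a b
    rw [← e] at hm
    obtain ⟨τ, hτ⟩ := exists_QF (quadF a) a (rt _ a (mem_quadF a)) (by convert finrank_quadF a ha)
      (rt_sq _ _ _) ha
    rcases hτ.sq_int (rt _ b hm) b (by rw [pow_two, rt_sq]) with h5 | h5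
    · exact hb h5
    · exact hab h5
  have h4 : 0 < Module.finrank ℚ (biquadF a b) := Module.finrank_pos
  omega

theorem rel_deg (K L : IntermediateField ℚ ℂ) (h : K ≤ L) (hK : Module.finrank ℚ K = 2)
    (hL : Module.finrank ℚ L = 4) :
    @Module.finrank K L _ _ (IntermediateField.inclusion h).toRingHom.toAlgebra.toModule = 2 := by
  let _ : Algebra K L := (IntermediateField.inclusion h).toRingHom.toAlgebra
  have : IsScalarTower ℚ K L := IsScalarTower.of_algebraMap_eq (fun x => rfl)
  have := Module.finrank_mul_finrank ℚ K L
  rw [hK, hL] at this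
  omega

theorem inst_thm (p q s : ℕ) (hp : p.Prime) (hq : q.Prime) (hs : s.Prime) (hp8 : p % 8 = 5)
    (hq4 : q % 4 = 3) (hs4 : s % 4 = 3) (hqs : q ≠ s) (hpq : IsSquare (p : ZMod q))
    (P : Sylow 2 (ClassGroup (𝓞 (biquadF (p * q) s)))) (Q : Sylow 2 (ClassGroup (𝓞 (quadF (p * q * s))))) :
    IsCyclic (P : Subgroup (ClassGroup (𝓞 (biquadF (p * q) s)))) ∧
      Nat.card (P : Subgroup (ClassGroup (𝓞 (biquadF (p * q) s)))) =
      Nat.card (Q : Subgroup (ClassGroup (𝓞 (quadF (p * q * s))))) := by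
  have hneq : p ≠ q := by rintro rfl; omega
  have hnes : p ≠ s := by rintro rfl; omega
  have fp : Fact p.Prime := ⟨hp⟩
  have fq : Fact q.Prime := ⟨hq⟩
  have hqp : IsSquare (q : ZMod p) :=
    (ZMod.exists_sq_eq_prime_iff_of_mod_four_eq_one (p := p) (q := q) (by omega) (by omega)).mpr hpq
  have ndvd : ∀ a b : ℕ, a.Prime → b.Prime → a ≠ b → ¬ a ∣ b :=
    fun a b ha hb hab h => hab ((Nat.prime_dvd_prime_iff_eq ha hb).mp h)
  have npq := ndvd p q hp hq hneq
  have nps := ndvd p s hp hs hnes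
  have sq1 : ¬ IsSquare (s : ℤ) := by
    have := nsq_int s 1 hs (by rw [Nat.dvd_one]; exact hs.one_lt.ne')
    simpa using this
  have sq2 : ¬ IsSquare ((p * q : ℕ) : ℤ) := by
    have := nsq_int p q hp npq
    push_cast; exact this
  have sq3 : ¬ IsSquare ((p * q * s : ℕ) : ℤ) := by
    have := nsq_int p (q * s) hp (by rw [hp.dvd_mul]; tauto)
    push_cast at this ⊢; rwa [mul_assoc]
  have m1 := mem_biquadF_left (p * q) s
  have m2 := mem_biquadF_right (p * q) s
  have m3 : ((Real.sqrt (p * q * s : ℕ) : ℝ) : ℂ) ∈ biquadF (p * q) s := by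
    rw [sqrtC_mul]; exact mul_mem m1 m2
  have lk := quadF_le _ _ m3
  have lF := quadF_le _ _ m2
  have lF' := quadF_le _ _ m1
  have r1 := finrank_quadF _ sq1
  have r2 := finrank_quadF _ sq2
  have r3 := finrank_quadF _ sq3
  have rL := finrank_biquadF (p * q) s sq2 sq1 (by rw [← Nat.cast_mul]; exact sq3)
  have dk := rel_deg _ _ lk r3 rL
  have dF := rel_deg _ _ lF r1 rL
  have dF' := rel_deg _ _ lF' r2 rL
  let _ : Algebra (quadF (p * q * s)) (biquadF (p * q) s) := (IntermediateField.inclusion lk).toRingHom.toAlgebra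
  let _ : Algebra (quadF s) (biquadF (p * q) s) := (IntermediateField.inclusion lF).toRingHom.toAlgebra
  let _ : Algebra (quadF (p * q)) (biquadF (p * q) s) := (IntermediateField.inclusion lF').toRingHom.toAlgebra
  refine main_abs (quadF (p * q * s)) (quadF s) (quadF (p * q)) (biquadF (p * q) s)
    (by convert r3) (by convert r1) (by convert r2) dk dF dF' p q s hp hq hs hp8 hq4 hs4 hqs hqp
    (rt _ _ (mem_quadF _)) (rt _ _ (mem_quadF _)) (rt _ _ (mem_quadF _)) ?_ ?_ ?_ ?_ P Q
  · rw [rt_sq]; push_cast; rfl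
  · rw [rt_sq]
  · rw [rt_sq]; push_cast; rfl
  · apply coe2_inj
    exact (sqrtC_mul (p * q) s).trans (mul_comm _ _)

theorem two_class_groups_cyclic_of_order_h2pqs
    (p q s : ℕ) (hp : p.Prime) (hq : q.Prime) (hs : s.Prime)
    (hpq : p ≠ q) (hps : p ≠ s) (hqs : q ≠ s)
    (hp8 : p % 8 = 5) (hq8 : q % 8 = 3) (hs4 : s % 4 = 3)
    (hQRq : IsSquare (p : ZMod q)) (hQRs : IsSquare (p : ZMod s)) :
    ∀ Q : Sylow 2 (ClassGroup (𝓞 (quadF (p * q * s)))),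
    (∀ P : Sylow 2 (ClassGroup (𝓞 (biquadF (p * q) s))),
      IsCyclic (P : Subgroup (ClassGroup (𝓞 (biquadF (p * q) s)))) ∧
      Nat.card (P : Subgroup (ClassGroup (𝓞 (biquadF (p * q) s)))) =
        Nat.card (Q : Subgroup (ClassGroup (𝓞 (quadF (p * q * s)))))) ∧
    (∀ P : Sylow 2 (ClassGroup (𝓞 (biquadF (p * s) q))),
      IsCyclic (P : Subgroup (ClassGroup (𝓞 (biquadF (p * s) q)))) ∧
      Nat.card (P : Subgroup (ClassGroup (𝓞 (biquadF (p * s) q)))) =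
        Nat.card (Q : Subgroup (ClassGroup (𝓞 (quadF (p * q * s)))))) := by
  intro Q
  refine ⟨fun P => inst_thm p q s hp hq hs hp8 (by omega) hs4 hqs hQRq P Q, ?_⟩
  have h := fun P Q => inst_thm p s q hp hs hq hp8 hs4 (by omega) hqs.symm hQRs P Q
  have e : p * s * q = p * q * s := by ring
  rw [e] at h
  exact fun P => h P Q
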